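/- Let q be an even prime power with q ≥ 8. Then every complete k-cap in PG(3, q) with k < q² + 1 satisfies k < q² − (√5 − 1)q + 5 (so m′₂(3, q) < q² − (√5 − 1)q + 5). -/

import Mathlib

open Module

/-- Points of the projective space `PG(n, q)` over the field `F` (with `q = |F|`). -/
abbrev PGPoint (F : Type*) [Field F] (n : ℕ) := Projectivization F (Fin (n + 1) → F)

/-- The set of projective points lying in the projective subspace determined by
a linear subspace `W`. -/
def ptsIn {F : Type*} [Field F] {n : ℕ} (W : Submodule F (Fin (n + 1) → F)) :
    Set (PGPoint F n) := {P | P.submodule ≤ W}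

/-- Three points of `PG(n, q)` are collinear if they lie on a common line. -/
def Coll3 {F : Type*} [Field F] {n : ℕ} (P₁ P₂ P₃ : PGPoint F n) : Prop :=
  Module.finrank F ↥(P₁.submodule ⊔ P₂.submodule ⊔ P₃.submodule) ≤ 2

/-- A cap (a plane arc when `n = 2`): a set of points no three of which are collinear. -/
def IsCap {F : Type*} [Field F] {n : ℕ} (K : Set (PGPoint F n)) : Prop :=
  ∀ P₁ ∈ K, ∀ P₂ ∈ K, ∀ P₃ ∈ K, P₁ ≠ P₂ → P₁ ≠ P₃ → P₂ ≠ P₃ → ¬ Coll3 P₁ P₂ P₃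

/-- A complete cap: a cap that is not contained in a cap with one more point. -/
def IsCompleteCap {F : Type*} [Field F] {n : ℕ} (K : Set (PGPoint F n)) : Prop :=
  IsCap K ∧ ∀ P ∉ K, ¬ IsCap (insert P K)

/-- A tangent line of `K`: a line (2-dimensional linear subspace) meeting `K`
in exactly one point. -/
def IsTangent {F : Type*} [Field F] {n : ℕ} (K : Set (PGPoint F n))
    (W : Submodule F (Fin (n + 1) → F)) : Prop :=
  Module.finrank F W = 2 ∧ (ptsIn W ∩ K).ncard = 1

/-!
Segre's algebraic argument bounds the tangents of a plane arc `A` through a point of a secant by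
`q + 2 - #A`. Let `t = q ^ 2 + q + 2 - #K` be the number of tangents of a complete cap `K` at each
of its points. Every point `Q` off `K` lies on a secant, so Segre's bound, summed over the planes
through that secant, leaves at most `t` tangents through `Q`; the defect `δ(Q) ≥ 0` measures what is
missing. Counting tangents over points, lines and planes in several ways bounds a cubic polynomial
in `t` by a weighted number of planes meeting `K` in `q` points. The `q`-arc in such a plane extends
by two nuclei, and a point that is a nucleus for two planes has defect at least four; as the total
defect is limited, such points are few, and so are the planes. The resulting inequality fails
for `4 * t ≤ 9 * q - 16`, and `9 / 4 > √5`.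
-/

open Finset

/-! ### Lagrange interpolation over a finite field -/

section Lagrange

open Polynomial Lagrange

variable {F : Type*} [Field F] {ι : Type*}

lemma nodal_mul_nodal_compl_image [Fintype F] [DecidableEq F] {c : ι → F} {A : Finset ι}
    (hc : Set.InjOn c A) :
    nodal A c * nodal (A.image c)ᶜ id = X ^ Fintype.card F - X := by
  have h_image : nodal A c = nodal (A.image c) id := by
    simp only [nodal, id, prod_image hc]
  have h_splits : (X ^ Fintype.card F - X : F[X]).Splits :=
    splits_iff_card_roots.mpr <| by
      rw [FiniteField.roots_X_pow_card_sub_X,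
        FiniteField.X_pow_card_sub_X_natDegree_eq F Fintype.one_lt_card]
      rfl
  have h_monic : (X ^ Fintype.card F - X : F[X]).Monic :=
    monic_X_pow_sub (by simpa using Fintype.one_lt_card (α := F))
  rw [h_image, nodal, nodal, prod_mul_prod_compl]
  conv_rhs =>
    rw [h_splits.eq_prod_roots_of_monic h_monic, FiniteField.roots_X_pow_card_sub_X]
  rfl

variable [DecidableEq ι]

lemma eval_nodal_compl_image [Fintype F] [DecidableEq F] {c : ι → F} {A : Finset ι}
    (hc : Set.InjOn c A) {s : ι} (hs : s ∈ A) :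
    (nodal (A.image c)ᶜ id).eval (c s) = -nodalWeight A c s := by
  have h := congrArg (fun p ↦ (derivative p).eval (c s)) (nodal_mul_nodal_compl_image hc)
  simp only [derivative_mul, eval_add, eval_mul, eval_nodal_at_node hs, zero_mul, add_zero,
    derivative_sub, derivative_X_pow, Nat.cast_card_eq_zero, map_zero, derivative_X, zero_sub,
    eval_neg, eval_one] at h
  rw [nodalWeight_eq_eval_derivative_nodal hs]
  exact eq_neg_of_add_eq_zero_right (by grind)

/-- Lagrange interpolation of the monic polynomial that vanishes off the slopes of `A`. -/
lemma sum_nodalWeight_mul_nodalWeight [Fintype F] {c : ι → F} {A E : Finset ι} (hEA : E ⊆ A)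
    (hc : Set.InjOn c A) (hcard : Fintype.card F < #A + #E) :
    ∑ s ∈ E, nodalWeight A c s * nodalWeight E c s =
      -if #A + #E = Fintype.card F + 1 then 1 else 0 := by
  classical
  set g : F[X] := nodal (A.image c)ᶜ id
  have h_deg : g.natDegree + #A = Fintype.card F := by
    rw [natDegree_nodal, ← card_image_of_injOn hc, card_compl_add_card]
  have h_coeff : g.coeff (#E - 1) = if #A + #E = Fintype.card F + 1 then 1 else 0 := by
    split_ifs with h
    · rw [show #E - 1 = g.natDegree by omega]
      exact nodal_monic
    · exact coeff_eq_zero_of_natDegree_lt (by omega)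
  rw [← h_coeff, coeff_eq_sum (hc.mono hEA), ← sum_neg_distrib]
  · refine sum_congr rfl fun s hs ↦ ?_
    rw [eval_nodal_compl_image hc (hEA hs), nodalWeight_eq_eval_nodal_erase_inv (s := E),
      eval_nodal, neg_div, neg_neg, div_eq_mul_inv]
  · rw [degree_eq_natDegree nodal_monic.ne_zero]
    exact_mod_cast (by omega : g.natDegree < #E)

lemma inv_prod_erase_sub_mul {c γ : ι → F} {S : Finset ι} (hγ : ∀ a ∈ S, γ a ≠ 0)
    {s : ι} (hs : s ∈ S) :
    (∏ a ∈ S.erase s, (c s - c a) * (γ s * γ a))⁻¹ =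
      nodalWeight S c s * (∏ a ∈ S, γ a)⁻¹ * γ s ^ 2 / γ s ^ #S := by
  rw [prod_mul_distrib, prod_mul_distrib, prod_const, mul_inv, mul_inv, ← mul_prod_erase S γ hs,
    nodalWeight, prod_inv_distrib, ← card_erase_add_one hs]
  have := hγ s hs
  field_simp
  rw [pow_succ]

lemma sum_inv_prod_erase_sub_mul [Fintype F] {c γ : ι → F} {A E : Finset ι} (hEA : E ⊆ A)
    (hc : Set.InjOn c A) (hγ : ∀ a ∈ A, γ a ≠ 0) {j : ℕ}
    (hj : #A + #E + j = Fintype.card F + 3) (hj2 : j ≤ 2) :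
    ∑ s ∈ E, ((∏ a ∈ A.erase s, (c s - c a) * (γ s * γ a)) *
        (∏ z ∈ E.erase s, (c s - c z) * (γ s * γ z)) * γ s ^ j)⁻¹ =
      -((∏ a ∈ A, γ a) * ∏ a ∈ E, γ a)⁻¹ * if j = 2 then 1 else 0 := by
  have h_term : ∀ s ∈ E, ((∏ a ∈ A.erase s, (c s - c a) * (γ s * γ a)) *
        (∏ z ∈ E.erase s, (c s - c z) * (γ s * γ z)) * γ s ^ j)⁻¹ =
      ((∏ a ∈ A, γ a) * ∏ a ∈ E, γ a)⁻¹ * (nodalWeight A c s * nodalWeight E c s) := by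
    intro s hs
    have hγs := hγ s (hEA hs)
    have h_pow : γ s ^ #A * γ s ^ #E * γ s ^ j = γ s ^ 2 * γ s ^ 2 := by
      rw [← pow_add, ← pow_add, hj, pow_add, FiniteField.pow_card]
      ring
    calc
      _ = ((∏ a ∈ A, γ a) * ∏ a ∈ E, γ a)⁻¹ * (nodalWeight A c s * nodalWeight E c s) *
          (γ s ^ 2 * γ s ^ 2 / (γ s ^ #A * γ s ^ #E * γ s ^ j)) := by
        rw [mul_inv, mul_inv, inv_prod_erase_sub_mul hγ (hEA hs),
          inv_prod_erase_sub_mul (fun a ha ↦ hγ a (hEA ha)) hs]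
        field_simp
      _ = _ := by rw [h_pow, div_self (by positivity), mul_one]
  have h_cond : #A + #E = Fintype.card F + 1 ↔ j = 2 := by omega
  rw [sum_congr rfl h_term, ← mul_sum, sum_nodalWeight_mul_nodalWeight hEA hc (by omega)]
  simp only [h_cond, mul_neg, neg_mul]

end Lagrange

/-! ### Segre's bound for the tangents of a plane arc through a point -/

section PlaneArc

variable {F : Type*} [Field F]

/-- The bracket of three vectors of `F³`: it vanishes iff the corresponding points of `PG(2, F)`
are collinear. -/
def bracket (x y z : Fin 3 → F) : F := (Matrix.of ![x, y, z]).det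

lemma bracket_eq (x y z : Fin 3 → F) : bracket x y z =
    x 0 * (y 1 * z 2 - y 2 * z 1) - x 1 * (y 0 * z 2 - y 2 * z 0) +
      x 2 * (y 0 * z 1 - y 1 * z 0) := by
  simp [bracket, Matrix.det_fin_three]
  ring

lemma bracket_smul_right (x y z : Fin 3 → F) (t : F) : bracket x y (t • z) = t * bracket x y z := by
  simp only [bracket_eq, Pi.smul_apply, smul_eq_mul]
  ring

lemma bracket_smul_add_smul (x y z : Fin 3 → F) (α β : F) :
    bracket x y (α • x + β • z) = β * bracket x y z := by
  simp only [bracket_eq, Pi.add_apply, Pi.smul_apply, smul_eq_mul]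
  ring

lemma bracket_plucker (e x y z w : Fin 3 → F) :
    bracket e x y * bracket e z w - bracket e w y * bracket e z x =
      bracket e z y * bracket e x w := by
  simp only [bracket_eq]
  ring

lemma bracket_swap_left [CharP F 2] (x y z : Fin 3 → F) : bracket y x z = bracket x y z := by
  rw [← CharTwo.neg_eq (bracket x y z)]
  simp only [bracket_eq]
  ring

lemma bracket_swap_right [CharP F 2] (x y z : Fin 3 → F) : bracket x z y = bracket x y z := by
  rw [← CharTwo.neg_eq (bracket x y z)]
  simp only [bracket_eq]
  ring

variable {ι : Type*}

/-- The lines joining `e` to the points `v a` get slopes `c a` with respect to the line `eQ` at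
infinity. -/
lemma exists_slope (v : ι → Fin 3 → F) {e Q : Fin 3 → F} {A : Finset ι}
    (hQ : ∀ a ∈ A, bracket e Q (v a) ≠ 0)
    (hA : ∀ a ∈ A, ∀ b ∈ A, a ≠ b → bracket e (v a) (v b) ≠ 0) :
    ∃ c : ι → F, Set.InjOn c A ∧ ∀ a ∈ A, ∀ b ∈ A, bracket e (v a) (v b) =
      (c a - c b) * (bracket e Q (v a) * bracket e Q (v b)) := by
  obtain rfl | ⟨o, ho⟩ := A.eq_empty_or_nonempty
  · exact ⟨0, by simp, by simp⟩
  set R : Fin 3 → F := (bracket e Q (v o))⁻¹ • v o with hR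
  have h_R : bracket e Q R = 1 := by rw [hR, bracket_smul_right, inv_mul_cancel₀ (hQ o ho)]
  have h_slope : ∀ a ∈ A, ∀ b ∈ A, bracket e (v a) (v b) =
      (bracket e (v a) R / bracket e Q (v a) - bracket e (v b) R / bracket e Q (v b)) *
        (bracket e Q (v a) * bracket e Q (v b)) := by
    intro a ha b hb
    have h := bracket_plucker e (v a) R Q (v b)
    rw [h_R, one_mul] at h
    have := hQ a ha
    have := hQ b hb
    field_simp
    linear_combination -h
  refine ⟨_, fun a ha b hb hab ↦ ?_, h_slope⟩
  by_contra hne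
  exact hA a ha b hb hne (by rw [h_slope a ha b hb, sub_eq_zero_of_eq hab, zero_mul])

lemma card_le_of_bracket_ne_zero [Fintype F] (v : ι → Fin 3 → F) {e Q : Fin 3 → F}
    {A : Finset ι} (hQ : ∀ a ∈ A, bracket e Q (v a) ≠ 0)
    (hA : ∀ a ∈ A, ∀ b ∈ A, a ≠ b → bracket e (v a) (v b) ≠ 0) : #A ≤ Fintype.card F := by
  obtain ⟨c, hc, -⟩ := exists_slope v hQ hA
  exact card_le_card_of_injOn c (fun _ _ ↦ mem_univ _) hc

variable [DecidableEq ι]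

lemma sum_inv_prod_bracket [Fintype F] (v : ι → Fin 3 → F) {e Q : Fin 3 → F} {A E : Finset ι}
    (hEA : E ⊆ A) (hQ : ∀ a ∈ A, bracket e Q (v a) ≠ 0)
    (hA : ∀ a ∈ A, ∀ b ∈ A, a ≠ b → bracket e (v a) (v b) ≠ 0) {j : ℕ}
    (hj : #A + #E + j = Fintype.card F + 3) (hj2 : j ≤ 2) :
    ∑ s ∈ E, ((∏ a ∈ A.erase s, bracket e (v s) (v a)) *
        (∏ z ∈ E.erase s, bracket e (v s) (v z)) * bracket e Q (v s) ^ j)⁻¹ =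
      -((∏ a ∈ A, bracket e Q (v a)) * ∏ a ∈ E, bracket e Q (v a))⁻¹ *
        if j = 2 then 1 else 0 := by
  obtain ⟨c, hc, hcA⟩ := exists_slope v hQ hA
  rw [← sum_inv_prod_erase_sub_mul hEA hc hQ hj hj2]
  refine sum_congr rfl fun s hs ↦ ?_
  rw [prod_congr rfl fun a ha ↦ hcA s (hEA hs) a (mem_of_mem_erase ha),
    prod_congr rfl fun a ha ↦ hcA s (hEA hs) a (hEA (mem_of_mem_erase ha))]

/-- The vectors `v a`, `a ∈ A`, represent the points of an arc of `PG(2, F)`: no three of them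
are linearly dependent. -/
def IsArcFamily (v : ι → Fin 3 → F) (A : Finset ι) : Prop :=
  ∀ x ∈ A, ∀ y ∈ A, ∀ z ∈ A, x ≠ y → x ≠ z → y ≠ z → bracket (v x) (v y) (v z) ≠ 0

/-- The summand indexed by `(e, s)` of the double sum over the off-diagonal of `E` whose vanishing
in characteristic two proves Segre's bound. -/
def segreTerm (v : ι → Fin 3 → F) (Q : Fin 3 → F) (A E : Finset ι) (e s : ι) : F :=
  ((∏ a ∈ (A.erase e).erase s, bracket (v e) (v s) (v a)) *
    (∏ z ∈ (E.erase e).erase s, bracket (v e) (v s) (v z)) * bracket (v e) Q (v s))⁻¹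

variable {v : ι → Fin 3 → F} {Q : Fin 3 → F} {A E T : Finset ι}

lemma segreTerm_comm [CharP F 2] (e s : ι) : segreTerm v Q A E e s = segreTerm v Q A E s e := by
  rw [segreTerm, segreTerm, bracket_swap_right, bracket_swap_left, bracket_swap_right,
    erase_right_comm, erase_right_comm (s := E)]
  simp only [bracket_swap_left (v e) (v s)]

lemma sum_segreTerm_eq_zero [Fintype F] (hA : IsArcFamily v A) (hEA : E ⊆ A) {e : ι} (he : e ∈ E)
    (htan : ∀ y ∈ A, y ≠ e → bracket (v e) Q (v y) ≠ 0) (hcard : #A + #E = Fintype.card F + 4) :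
    ∑ s ∈ E.erase e, segreTerm v Q A E e s = 0 := by
  have h := sum_inv_prod_bracket v (e := v e) (Q := Q) (j := 1) (erase_subset_erase e hEA)
    (fun a ha ↦ htan a (mem_of_mem_erase ha) (ne_of_mem_erase ha))
    (fun a ha b hb hab ↦ hA e (hEA he) a (mem_of_mem_erase ha) b (mem_of_mem_erase hb)
      (ne_of_mem_erase ha).symm (ne_of_mem_erase hb).symm hab)
    (by grind [card_erase_add_one he, card_erase_add_one (hEA he)]) one_le_two
  simpa [segreTerm] using h

lemma segreTerm_of_secant [CharP F 2] {p p' : ι} (hpE : p ∈ E) (hp' : p' ∈ A \ E) {α β : F}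
    (hαβ : v p' = α • v p + β • Q) {s : ι} (hs : s ∈ E.erase p) :
    segreTerm v Q A E p s =
      β⁻¹ * ((∏ a ∈ ((A.erase p).erase p').erase s, bracket (v p) (v s) (v a)) *
        (∏ z ∈ (E.erase p).erase s, bracket (v p) (v s) (v z)) *
        bracket (v p) Q (v s) ^ 2)⁻¹ := by
  have hp'mem : p' ∈ (A.erase p).erase s := by grind
  rw [segreTerm, ← mul_prod_erase _ _ hp'mem, hαβ, bracket_smul_add_smul, erase_right_comm,
    bracket_swap_right (v p) Q (v s), ← mul_inv]
  ring

lemma bracket_ne_zero_of_secant [CharP F 2] (hA : IsArcFamily v A) {p p' : ι} (hp : p ∈ A)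
    (hp' : p' ∈ A) (hpp' : p ≠ p') {α β : F} (hαβ : v p' = α • v p + β • Q) :
    ∀ y ∈ (A.erase p).erase p', β * bracket (v p) Q (v y) ≠ 0 := by
  intro y hy
  rw [← bracket_swap_right, ← bracket_smul_add_smul _ _ _ α, ← hαβ]
  exact hA p hp y (by grind) p' hp' (by grind) hpp' (by grind)

lemma sum_segreTerm_ne_zero [Fintype F] [CharP F 2] (hA : IsArcFamily v A) (hEA : E ⊆ A) {p p' : ι}
    (hp : p ∈ E) (hp' : p' ∈ A \ E) {α β : F} (hαβ : v p' = α • v p + β • Q)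
    (hE : (E.erase p).Nonempty) (hcard : #A + #E = Fintype.card F + 4) :
    ∑ s ∈ E.erase p, segreTerm v Q A E p s ≠ 0 := by
  obtain ⟨hp'A, hp'E⟩ := mem_sdiff.mp hp'
  have hne : p ≠ p' := fun h ↦ hp'E (h ▸ hp)
  have h_sub : E.erase p ⊆ (A.erase p).erase p' := by grind
  have h_ne := bracket_ne_zero_of_secant hA (hEA hp) hp'A hne hαβ
  have hβ : β ≠ 0 := by
    obtain ⟨y, hy⟩ := hE
    exact left_ne_zero_of_mul (h_ne y (h_sub hy))
  have hQ : ∀ y ∈ (A.erase p).erase p', bracket (v p) Q (v y) ≠ 0 := fun y hy ↦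
    right_ne_zero_of_mul (h_ne y hy)
  rw [sum_congr rfl fun s hs ↦ segreTerm_of_secant hp hp' hαβ hs, ← mul_sum,
    sum_inv_prod_bracket v h_sub hQ (fun a ha b hb hab ↦ hA p (hEA hp) a (by grind) b (by grind)
      (by grind) (by grind) hab) _ le_rfl, if_pos rfl, mul_one]
  · exact mul_ne_zero (inv_ne_zero hβ) <| neg_ne_zero.mpr <| inv_ne_zero <| mul_ne_zero
      (prod_ne_zero_iff.mpr hQ) (prod_ne_zero_iff.mpr fun y hy ↦ hQ y (h_sub hy))
  · have hp'A' : p' ∈ A.erase p := mem_erase.mpr ⟨hne.symm, hp'A⟩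
    grind [card_erase_add_one hp, card_erase_add_one (hEA hp), card_erase_add_one hp'A']

lemma sum_sum_erase_eq_zero_of_symm {R : Type*} [Ring R] [CharP R 2] (E : Finset ι)
    {g : ι → ι → R} (hg : ∀ a b, g a b = g b a) : ∑ e ∈ E, ∑ s ∈ E.erase e, g e s = 0 := by
  rw [sum_sigma']
  refine sum_involution (fun x _ ↦ ⟨x.2, x.1⟩) (fun x _ ↦ ?_) (fun x hx _ h ↦ ?_)
    (fun x hx ↦ ?_) fun _ _ ↦ rfl
  · rw [hg x.2 x.1, CharTwo.add_self_eq_zero]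
  · exact (mem_erase.mp (mem_sigma.mp hx).2).1 (congrArg Sigma.fst h)
  · simp only [mem_sigma, mem_erase] at hx ⊢
    exact ⟨hx.2.2, hx.2.1.symm, hx.1⟩

omit [DecidableEq ι] in
theorem IsArcFamily.card_tangents_add_card_le [Fintype F] [CharP F 2] (hA : IsArcFamily v A)
    (hTA : T ⊆ A) (htan : ∀ x ∈ T, ∀ y ∈ A, y ≠ x → bracket (v x) Q (v y) ≠ 0)
    {p p' : ι} (hp : p ∈ A) (hp' : p' ∈ A) (hpp' : p ≠ p') {α β : F}
    (hαβ : v p' = α • v p + β • Q) : #T + #A ≤ Fintype.card F + 2 := by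
  classical
  by_contra! hlt
  have hpQ : bracket (v p) Q (v p') = 0 := by
    rw [hαβ, bracket_smul_add_smul, bracket_eq]
    ring
  have hpT : p ∉ T := fun h ↦ htan p h p' hp' hpp'.symm hpQ
  have hp'T : p' ∉ T := fun h ↦ htan p' h p hp hpp' (by
    rwa [bracket_swap_right, bracket_swap_left, bracket_swap_right])
  have hcardA : #A ≤ Fintype.card F + 2 := by
    have h_ne := bracket_ne_zero_of_secant hA hp hp' hpp' hαβ
    have h := card_le_of_bracket_ne_zero v (fun y hy ↦ right_ne_zero_of_mul (h_ne y hy))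
      fun a ha b hb hab ↦ hA p hp a (by grind) b (by grind) (by grind) (by grind) hab
    have hp'A : p' ∈ A.erase p := mem_erase.mpr ⟨hpp'.symm, hp'⟩
    grind [card_erase_add_one hp, card_erase_add_one hp'A]
  obtain ⟨T', hT'T, hT'card⟩ := exists_subset_card_eq (s := T) (n := Fintype.card F + 3 - #A)
    (by omega)
  have hpT' : p ∉ T' := fun h ↦ hpT (hT'T h)
  have hEA : insert p T' ⊆ A := insert_subset hp (hT'T.trans hTA)
  have hcard : #A + #(insert p T') = Fintype.card F + 4 := by
    rw [card_insert_of_notMem hpT']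
    omega
  have h_rows : ∀ e ∈ T', ∑ s ∈ (insert p T').erase e, segreTerm v Q A (insert p T') e s = 0 :=
    fun e he ↦ sum_segreTerm_eq_zero hA hEA (mem_insert_of_mem he) (htan e (hT'T he)) hcard
  have h_sum := sum_sum_erase_eq_zero_of_symm (insert p T')
    (segreTerm_comm (v := v) (Q := Q) (A := A) (E := insert p T'))
  rw [sum_insert hpT', sum_eq_zero h_rows, add_zero] at h_sum
  refine sum_segreTerm_ne_zero hA hEA (mem_insert_self p T') (by grind) hαβ ?_ hcard h_sum
  rw [erase_insert hpT', ← card_pos]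
  omega

end PlaneArc

/-! ### Counting tangents of a cap -/

/-- The incidence geometry of `PG(3, q)`: lines and planes are given by their sets of points. -/
structure ProjectiveThreeSpace (α : Type*) [Fintype α] [DecidableEq α] (q : ℕ) where
  lines : Finset (Finset α)
  planes : Finset (Finset α)
  /-- The line joining two points; its value at two equal points is irrelevant. -/
  line : α → α → Finset α
  card_points : Fintype.card α = q ^ 3 + q ^ 2 + q + 1
  line_mem_lines : ∀ {P Q}, P ≠ Q → line P Q ∈ lines
  left_mem_line : ∀ P Q, P ∈ line P Q
  right_mem_line : ∀ P Q, Q ∈ line P Q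
  eq_line : ∀ {l}, l ∈ lines → ∀ {P Q}, P ∈ l → Q ∈ l → P ≠ Q → l = line P Q
  line_subset_plane : ∀ {π}, π ∈ planes → ∀ {P Q}, P ∈ π → Q ∈ π → P ≠ Q → line P Q ⊆ π
  card_line : ∀ {l}, l ∈ lines → #l = q + 1
  card_plane : ∀ {π}, π ∈ planes → #π = q ^ 2 + q + 1
  card_planes_through : ∀ {l}, l ∈ lines → #{π ∈ planes | l ⊆ π} = q + 1
  card_planes_through_of_notMem :
    ∀ {l}, l ∈ lines → ∀ {P}, P ∉ l → #{π ∈ planes | l ⊆ π ∧ P ∈ π} = 1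
  exists_mem_of_coplanar :
    ∀ {π}, π ∈ planes → ∀ {l m}, l ∈ lines → m ∈ lines → l ⊆ π → m ⊆ π → ∃ P ∈ l, P ∈ m
  inter_mem_lines : ∀ {π π'}, π ∈ planes → π' ∈ planes → π ≠ π' → π ∩ π' ∈ lines

lemma sum_card_filter_comm {α β : Type*} (s : Finset α) (t : Finset β) (r : α → β → Prop)
    [∀ a b, Decidable (r a b)] :
    ∑ a ∈ s, #{b ∈ t | r a b} = ∑ b ∈ t, #{a ∈ s | r a b} :=
  sum_card_bipartiteAbove_eq_sum_card_bipartiteBelow r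

lemma cast_card_offDiag {α : Type*} (s : Finset α) :
    (#s.offDiag : ℤ) = #s * (#s - 1) := by
  rw [offDiag_card, Nat.cast_sub (Nat.le_mul_self _)]
  push_cast
  ring

lemma card_filter_offDiag {α : Type*} [DecidableEq α] (s : Finset α) (r : α → α → Prop)
    [∀ a b, Decidable (r a b)] :
    #{x ∈ s.offDiag | r x.1 x.2} = ∑ a ∈ s, #{b ∈ s.erase a | r a b} := by
  rw [← card_sigma]
  exact card_nbij' (fun x ↦ ⟨x.1, x.2⟩) (fun x ↦ (x.1, x.2)) (by intro x; simp; grind)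
    (by intro x; simp; grind) (fun _ _ ↦ rfl) (fun _ _ ↦ rfl)

lemma even_card_filter_offDiag {α : Type*} (s : Finset α) {r : α → α → Prop}
    [∀ a b, Decidable (r a b)] (hr : ∀ a b, a ≠ b → r a b → r b a) :
    Even #{x ∈ s.offDiag | r x.1 x.2} := by
  rw [even_iff_two_dvd, ← ZMod.natCast_eq_zero_iff, card_eq_sum_ones, Nat.cast_sum]
  refine sum_involution (fun x _ ↦ x.swap) (fun _ _ ↦ by decide) (fun x hx _ h ↦ ?_)
    (fun x hx ↦ ?_) fun x _ ↦ x.swap_swap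
  · exact (mem_offDiag.mp (mem_filter.mp hx).1).2.2 (congrArg Prod.snd h)
  · simp only [mem_filter, mem_offDiag, Prod.fst_swap, Prod.snd_swap] at hx ⊢
    exact ⟨⟨hx.1.2.1, hx.1.1, hx.1.2.2.symm⟩, hr _ _ hx.1.2.2 hx.2⟩

lemma sum_mul_card_inter {α : Type*} [DecidableEq α] (A : Finset (Finset α))
    (f : Finset α → ℤ) (S : Finset α) :
    ∑ π ∈ A, f π * #(S ∩ π) = ∑ P ∈ S, ∑ π ∈ A with P ∈ π, f π := by
  simp only [← filter_mem_eq_inter, card_filter, Nat.cast_sum, mul_sum, sum_filter]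
  rw [sum_comm]
  simp

namespace ProjectiveThreeSpace

variable {α : Type*} [Fintype α] [DecidableEq α] {q : ℕ} (G : ProjectiveThreeSpace α q)

lemma line_comm {P Q : α} (hPQ : P ≠ Q) : G.line P Q = G.line Q P :=
  G.eq_line (G.line_mem_lines hPQ) (G.right_mem_line P Q) (G.left_mem_line P Q) hPQ.symm

lemma line_eq_of_mem {P Q R : α} (hPQ : P ≠ Q) (hR : R ∈ G.line P Q) (hRP : R ≠ P) :
    G.line P R = G.line P Q :=
  (G.eq_line (G.line_mem_lines hPQ) (G.left_mem_line P Q) hR hRP.symm).symm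

lemma mem_line_of_mem {P Q R : α} (hPQ : P ≠ Q) (hR : R ∈ G.line P Q) (hRP : R ≠ P) :
    Q ∈ G.line P R := by
  rw [G.line_eq_of_mem hPQ hR hRP]
  exact G.right_mem_line P Q

lemma eq_of_mem_lines {l m : Finset α} (hl : l ∈ G.lines) (hm : m ∈ G.lines) {P Q : α}
    (hPQ : P ≠ Q) (hPl : P ∈ l) (hQl : Q ∈ l) (hPm : P ∈ m) (hQm : Q ∈ m) : l = m := by
  rw [G.eq_line hl hPl hQl hPQ, G.eq_line hm hPm hQm hPQ]

/-- A set of points is a flat if it contains the line joining any two of its points. -/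
def IsFlat (W : Finset α) : Prop := ∀ P ∈ W, ∀ Q ∈ W, P ≠ Q → G.line P Q ⊆ W

lemma isFlat_univ : G.IsFlat univ := fun _ _ _ _ _ ↦ subset_univ _

variable {G} in
lemma isFlat_of_mem_planes {π : Finset α} (hπ : π ∈ G.planes) : G.IsFlat π :=
  fun _ hP _ hQ hPQ ↦ G.line_subset_plane hπ hP hQ hPQ

/-- The pencil of planes with axis `l`. -/
def pencil (l : Finset α) : Finset (Finset α) := {π ∈ G.planes | l ⊆ π}

variable {G}

lemma mem_pencil {l π : Finset α} : π ∈ G.pencil l ↔ π ∈ G.planes ∧ l ⊆ π := mem_filter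

lemma card_pencil {l : Finset α} (hl : l ∈ G.lines) : #(G.pencil l) = q + 1 :=
  G.card_planes_through hl

lemma card_filter_pencil {l : Finset α} (hl : l ∈ G.lines) (P : α) :
    #{π ∈ G.pencil l | P ∈ π} = 1 + q * if P ∈ l then 1 else 0 := by
  split_ifs with hP
  · rw [filter_true_of_mem fun π hπ ↦ (mem_pencil.mp hπ).2 hP, card_pencil hl]
    ring
  · rw [pencil, filter_filter, G.card_planes_through_of_notMem hl hP, mul_zero, add_zero]

lemma sum_card_inter_pencil {l : Finset α} (hl : l ∈ G.lines) (S : Finset α) :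
    ∑ π ∈ G.pencil l, #(S ∩ π) = #S + q * #(S ∩ l) := by
  simp only [← filter_mem_eq_inter]
  rw [sum_card_filter_comm, sum_congr rfl fun P _ ↦ card_filter_pencil hl P, sum_add_distrib,
    ← mul_sum, ← card_filter, filter_mem_eq_inter, ← card_eq_sum_ones]

variable (G) in
/-- A cap: no three of its points are collinear. -/
def IsCap (K : Finset α) : Prop :=
  ∀ P ∈ K, ∀ R ∈ K, ∀ S ∈ K, P ≠ R → P ≠ S → R ≠ S → S ∉ G.line P R

variable (G) in
open scoped Classical in
/-- The points `P` of `K` that are the only point of `K` on the line `QP`. For `Q ∉ K` they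
correspond to the tangents of `K` through `Q`. -/
noncomputable def tangentPoints (K : Finset α) (Q : α) : Finset α :=
  {P ∈ K | ∀ R ∈ K, R ≠ P → Q ∉ G.line P R}

variable {K W : Finset α} {P Q R : α}

lemma mem_tangentPoints :
    P ∈ G.tangentPoints K Q ↔ P ∈ K ∧ ∀ R ∈ K, R ≠ P → Q ∉ G.line P R := by
  simp [tangentPoints]

lemma tangentPoints_subset : G.tangentPoints K Q ⊆ K := fun _ hP ↦ (mem_tangentPoints.mp hP).1

lemma tangentPoints_inter : G.tangentPoints K Q ∩ W = {P ∈ K ∩ W | P ∈ G.tangentPoints K Q} := by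
  ext P
  have := @tangentPoints_subset _ _ _ _ G K Q P
  simp only [mem_inter, mem_filter]
  tauto

lemma notMem_tangentPoints_of_mem_line (hR : R ∈ K) (hRP : R ≠ P) (hQ : Q ∈ G.line P R) :
    P ∉ G.tangentPoints K Q := fun h ↦ (mem_tangentPoints.mp h).2 R hR hRP hQ

lemma IsFlat.mem_of_mem_line (hW : G.IsFlat W) (hP : P ∈ W) (hQ : Q ∈ W) (hQP : Q ≠ P)
    (hRP : R ≠ P) (hQR : Q ∈ G.line P R) : R ∈ W :=
  hW P hP Q hQ hQP.symm (G.mem_line_of_mem hRP.symm hQR hQP)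

lemma IsCap.eq_of_mem_line (hK : G.IsCap K) {S : α} (hP : P ∈ K) (hR : R ∈ K) (hS : S ∈ K)
    (hQP : Q ≠ P) (hRP : R ≠ P) (hSP : S ≠ P) (hQR : Q ∈ G.line P R) (hQS : Q ∈ G.line P S) :
    R = S := by
  by_contra hRS
  have hSR := G.mem_line_of_mem hSP.symm hQS hQP
  rw [G.line_eq_of_mem hRP.symm hQR hQP] at hSR
  exact hK P hP R hR S hS hRP.symm hSP.symm hRS hSR

lemma IsCap.card_filter_mem_line (hK : G.IsCap K) (hW : G.IsFlat W) (hP : P ∈ K ∩ W) (hQ : Q ∈ W)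
    (hQP : Q ≠ P) :
    #{R ∈ (K ∩ W).erase P | Q ∈ G.line P R} + (if P ∈ G.tangentPoints K Q then 1 else 0) = 1 := by
  obtain ⟨hPK, hPW⟩ := mem_inter.mp hP
  split_ifs with h_tan
  · rw [mem_tangentPoints] at h_tan
    rw [filter_false_of_mem, card_empty]
    exact fun R hR ↦ h_tan.2 R (by grind) (ne_of_mem_erase hR)
  · obtain ⟨R, hR, hRP, hQR⟩ : ∃ R ∈ K, R ≠ P ∧ Q ∈ G.line P R := by
      simpa [mem_tangentPoints, hPK] using h_tan
    refine card_eq_one.mpr ⟨R, ext fun S ↦ ?_⟩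
    have hRW := hW.mem_of_mem_line hPW hQ hQP hRP hQR
    have h_uniq : S ∈ K → S ≠ P → Q ∈ G.line P S → S = R := fun hS hSP hQS ↦
      hK.eq_of_mem_line hPK hS hR hQP hSP hRP hQS hQR
    grind

lemma IsCap.card_secants_add_card_tangentPoints (hK : G.IsCap K) (hW : G.IsFlat W) (hQW : Q ∈ W)
    (hQ : Q ∉ K) :
    #{x ∈ (K ∩ W).offDiag | Q ∈ G.line x.1 x.2} + #(G.tangentPoints K Q ∩ W) = #(K ∩ W) := by
  rw [card_filter_offDiag (r := fun P R ↦ Q ∈ G.line P R), tangentPoints_inter, card_filter,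
    ← sum_add_distrib, card_eq_sum_ones]
  exact sum_congr rfl fun P hP ↦ hK.card_filter_mem_line hW hP hQW (by grind)

lemma IsCap.even_card_tangentPoints_iff (hK : G.IsCap K) (hW : G.IsFlat W) (hQW : Q ∈ W)
    (hQ : Q ∉ K) : Even #(G.tangentPoints K Q ∩ W) ↔ Even #(K ∩ W) := by
  have h_even : Even #{x ∈ (K ∩ W).offDiag | Q ∈ G.line x.1 x.2} :=
    even_card_filter_offDiag (r := fun P R ↦ Q ∈ G.line P R) _
      fun P R hPR h ↦ by rwa [G.line_comm hPR.symm]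
  rw [← hK.card_secants_add_card_tangentPoints hW hQW hQ, Nat.even_add]
  simp [h_even]

lemma IsCap.card_filter_tangentPoints (hK : G.IsCap K) (hW : G.IsFlat W) (hP : P ∈ K ∩ W) :
    (#{Q ∈ W \ K | P ∈ G.tangentPoints K Q} : ℤ) = #W + q - 1 - q * #(K ∩ W) := by
  obtain ⟨hPK, hPW⟩ := mem_inter.mp hP
  have h_eq : ({Q ∈ W \ K | P ∈ G.tangentPoints K Q} : Finset α) =
      {Q ∈ W.erase P | P ∈ G.tangentPoints K Q} := by
    have h : ∀ Q ∈ K, Q ≠ P → P ∉ G.tangentPoints K Q := fun Q hQ hQP ↦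
      notMem_tangentPoints_of_mem_line hQ hQP (G.right_mem_line P Q)
    grind
  have h_sum : ∑ Q ∈ W.erase P, #{R ∈ (K ∩ W).erase P | Q ∈ G.line P R} =
      #((K ∩ W).erase P) * q := by
    rw [sum_card_filter_comm, sum_const_nat]
    intro R hR
    obtain ⟨hRP, hRKW⟩ := mem_erase.mp hR
    have h_sub := hW P hPW R (mem_of_mem_inter_right hRKW) hRP.symm
    have h_filter : ({Q ∈ W.erase P | Q ∈ G.line P R} : Finset α) = (G.line P R).erase P := by
      grind
    rw [h_filter, card_erase_of_mem (G.left_mem_line P R), G.card_line (G.line_mem_lines hRP.symm),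
      Nat.add_sub_cancel]
  have h_count := sum_congr rfl fun Q (hQ : Q ∈ W.erase P) ↦
    hK.card_filter_mem_line hW hP (mem_of_mem_erase hQ) (ne_of_mem_erase hQ)
  rw [sum_add_distrib, h_sum, ← card_filter, ← card_eq_sum_ones] at h_count
  have hW_card := card_erase_add_one hPW
  have hKW_card := card_erase_add_one hP
  rw [h_eq]
  zify at h_count hW_card hKW_card
  linear_combination h_count + hW_card - q * hKW_card

lemma IsCap.sum_card_tangentPoints (hK : G.IsCap K) (hW : G.IsFlat W) :
    ∑ Q ∈ W \ K, (#(G.tangentPoints K Q ∩ W) : ℤ) = #(K ∩ W) * (#W + q - 1 - q * #(K ∩ W)) := by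
  simp only [tangentPoints_inter]
  rw [← Nat.cast_sum, sum_card_filter_comm, Nat.cast_sum,
    sum_congr rfl fun P hP ↦ hK.card_filter_tangentPoints hW hP, sum_const, nsmul_eq_mul]

lemma IsCap.inter_line (hK : G.IsCap K) (hP : P ∈ K) (hR : R ∈ K) (hPR : P ≠ R) :
    K ∩ G.line P R = {P, R} := by
  ext S
  have hS := hK P hP R hR S
  have hPl := G.left_mem_line P R
  have hRl := G.right_mem_line P R
  grind

lemma IsCap.card_inter_line (hK : G.IsCap K) (hP : P ∈ K) (hR : R ∈ K) (hPR : P ≠ R) :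
    #(K ∩ G.line P R) = 2 := by
  rw [hK.inter_line hP hR hPR, card_pair hPR]

lemma IsCap.tangentPoints_inter_line (hK : G.IsCap K) (hP : P ∈ K) (hR : R ∈ K) (hPR : P ≠ R)
    (hQ : Q ∈ G.line P R) : G.tangentPoints K Q ∩ G.line P R = ∅ := by
  have hP_tan := notMem_tangentPoints_of_mem_line hR hPR.symm hQ
  have hR_tan := notMem_tangentPoints_of_mem_line hP hPR (G.line_comm hPR ▸ hQ)
  rw [tangentPoints_inter, hK.inter_line hP hR hPR]
  grind

/-- Projecting the points of a plane section from one of its points onto a line of the plane. -/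
lemma IsCap.card_filter_line_tangentPoints (hK : G.IsCap K) {π l : Finset α} (hπ : π ∈ G.planes)
    (hl : l ∈ G.lines) (hlπ : l ⊆ π) (hP : P ∈ K ∩ π) (hPl : P ∉ l) :
    #{Q ∈ l | P ∈ G.tangentPoints K Q} + #(K ∩ π) = q + 2 := by
  have hPπ := (mem_inter.mp hP).2
  have h_sum : ∑ Q ∈ l, #{R ∈ (K ∩ π).erase P | Q ∈ G.line P R} = #((K ∩ π).erase P) := by
    rw [sum_card_filter_comm, card_eq_sum_ones]
    refine sum_congr rfl fun R hR ↦ card_eq_one.mpr ?_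
    have hPR : P ≠ R := (ne_of_mem_erase hR).symm
    obtain ⟨Q, hQl, hQR⟩ := G.exists_mem_of_coplanar hπ hl (G.line_mem_lines hPR) hlπ
      (G.line_subset_plane hπ hPπ (by grind) hPR)
    refine ⟨Q, ext fun Q' ↦ ?_⟩
    have h_uniq : Q' ∈ l → Q' ∈ G.line P R → Q' = Q := fun hQ'l hQ'R ↦ by
      by_contra hne
      exact hPl (G.eq_of_mem_lines hl (G.line_mem_lines hPR) hne hQ'l hQl hQ'R hQR ▸
        G.left_mem_line P R)
    grind
  have h_count := sum_congr rfl fun Q (hQ : Q ∈ l) ↦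
    hK.card_filter_mem_line (isFlat_of_mem_planes hπ) hP (hlπ hQ) fun h ↦ hPl (h ▸ hQ)
  rw [sum_add_distrib, h_sum, ← card_filter, ← card_eq_sum_ones, G.card_line hl] at h_count
  have := card_erase_add_one hP
  omega

lemma IsCap.sum_card_tangentPoints_secant (hK : G.IsCap K) {π : Finset α} (hπ : π ∈ G.planes)
    (hP : P ∈ K ∩ π) (hR : R ∈ K ∩ π) (hPR : P ≠ R) :
    ∑ Q ∈ G.line P R \ K, (#(G.tangentPoints K Q ∩ π) : ℤ) =
      (#(K ∩ π) - 2) * (q + 2 - #(K ∩ π)) := by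
  obtain ⟨hPK, hPπ⟩ := mem_inter.mp hP
  obtain ⟨hRK, hRπ⟩ := mem_inter.mp hR
  have hl := G.line_subset_plane hπ hPπ hRπ hPR
  have h_off : ∀ Q ∈ G.line P R \ K, G.tangentPoints K Q ∩ π =
      {S ∈ (K ∩ π) \ G.line P R | S ∈ G.tangentPoints K Q} := by
    intro Q hQ
    have h_disj := hK.tangentPoints_inter_line hPK hRK hPR (mem_sdiff.mp hQ).1
    rw [tangentPoints_inter]
    ext S
    have : S ∉ G.tangentPoints K Q ∩ G.line P R := h_disj ▸ notMem_empty S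
    grind
  have h_term : ∀ S ∈ (K ∩ π) \ G.line P R,
      (#{Q ∈ G.line P R \ K | S ∈ G.tangentPoints K Q} : ℤ) = q + 2 - #(K ∩ π) := by
    intro S hS
    obtain ⟨hSKπ, hSl⟩ := mem_sdiff.mp hS
    have h_eq : ({Q ∈ G.line P R \ K | S ∈ G.tangentPoints K Q} : Finset α) =
        {Q ∈ G.line P R | S ∈ G.tangentPoints K Q} := by
      have h : ∀ Q ∈ K, Q ≠ S → S ∉ G.tangentPoints K Q := fun Q hQ hQS ↦
        notMem_tangentPoints_of_mem_line hQ hQS (G.right_mem_line S Q)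
      grind
    have h_count := hK.card_filter_line_tangentPoints hπ (G.line_mem_lines hPR) hl hSKπ hSl
    rw [h_eq]
    zify at h_count
    linear_combination h_count
  have h_card : (#((K ∩ π) \ G.line P R) : ℤ) = #(K ∩ π) - 2 := by
    have h := card_sdiff_add_card_inter (K ∩ π) (G.line P R)
    rw [inter_assoc, inter_eq_right.mpr hl, hK.card_inter_line hPK hRK hPR] at h
    zify at h
    linear_combination h
  rw [← Nat.cast_sum, sum_congr rfl fun Q hQ ↦ congrArg card (h_off Q hQ), sum_card_filter_comm,
    Nat.cast_sum, sum_congr rfl h_term, sum_const, nsmul_eq_mul, h_card]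

/-- The number `t` of tangents of a cap `K` of `PG(3, q)` at each of its points. -/
def tangentDegree (q : ℕ) (K : Finset α) : ℤ := q ^ 2 + q + 2 - #K

/-- The number `t_π` of tangents of the arc `K ∩ π` at each of its points. -/
def planeTangentDegree (q : ℕ) (K π : Finset α) : ℤ := q + 2 - #(K ∩ π)

variable (G) in
/-- The defect `δ(Q)`: the number of tangents through `Q` missing from `t`. -/
noncomputable def defect (K : Finset α) (Q : α) : ℤ := tangentDegree q K - #(G.tangentPoints K Q)

variable (G) in
/-- The defect `f_π(Q)`: the number of tangents in `π` through `Q` missing from `t_π`. -/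
noncomputable def planeDefect (K π : Finset α) (Q : α) : ℤ :=
  planeTangentDegree q K π - #(G.tangentPoints K Q ∩ π)

variable (G) in
/-- The moment `S₂ = ∑ δ(Q) σ(Q)` over the points `Q` off `K`, where `σ(Q)` is the number of
tangents through `Q`. -/
noncomputable def defectMoment (K : Finset α) : ℤ :=
  ∑ Q ∈ Kᶜ, G.defect K Q * #(G.tangentPoints K Q)

variable (G) in
/-- A cap satisfying the two properties of complete caps of `PG(3, q)`, `q` even, on which the
counting rests: it has no free points, and Segre's bound holds for its plane sections. -/
structure IsSegreCap (K : Finset α) : Prop where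
  isCap : G.IsCap K
  exists_secant : ∀ Q ∉ K, ∃ P ∈ K, ∃ R ∈ K, P ≠ R ∧ Q ∈ G.line P R
  segre_bound : ∀ π ∈ G.planes, ∀ Q ∈ π, Q ∉ K → ∀ P ∈ K ∩ π, ∀ R ∈ K ∩ π, P ≠ R →
    Q ∈ G.line P R → #(G.tangentPoints K Q ∩ π) + #(K ∩ π) ≤ q + 2

variable {π : Finset α}

lemma sum_planeTangentDegree {l : Finset α} (hl : l ∈ G.lines) :
    ∑ π ∈ G.pencil l, planeTangentDegree q K π = tangentDegree q K + 2 * q - q * #(K ∩ l) := by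
  have h := sum_card_inter_pencil hl K
  zify at h
  simp only [planeTangentDegree, tangentDegree, sum_sub_distrib, sum_const, card_pencil hl, h,
    nsmul_eq_mul]
  push_cast
  ring

lemma IsCap.sum_planeTangentDegree_secant (hK : G.IsCap K) (hP : P ∈ K) (hR : R ∈ K)
    (hPR : P ≠ R) :
    ∑ π ∈ G.pencil (G.line P R), planeTangentDegree q K π = tangentDegree q K := by
  rw [sum_planeTangentDegree (G.line_mem_lines hPR), hK.card_inter_line hP hR hPR]
  push_cast
  ring

lemma IsCap.card_inter_line_add_card_tangentPoints (hK : G.IsCap K) (hP : P ∈ K) (hQ : Q ∉ K) :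
    #(K ∩ G.line Q P) + #(G.tangentPoints K Q ∩ G.line Q P) = 2 := by
  have hPQ : P ≠ Q := fun h ↦ hQ (h ▸ hP)
  by_cases h_tan : P ∈ G.tangentPoints K Q
  · have h_inter : K ∩ G.line Q P = {P} := by
      ext S
      have hPl := G.right_mem_line Q P
      have h_uniq : S ∈ K → S ≠ P → S ∉ G.line Q P := fun hS hSP hSl ↦
        (mem_tangentPoints.mp h_tan).2 S hS hSP
          (G.mem_line_of_mem hPQ (G.line_comm hPQ ▸ hSl) hSP)
      grind
    rw [tangentPoints_inter, h_inter, filter_singleton, if_pos h_tan, card_singleton]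
  · obtain ⟨R, hR, hRP, hQR⟩ : ∃ R ∈ K, R ≠ P ∧ Q ∈ G.line P R := by
      simpa [mem_tangentPoints, hP] using h_tan
    rw [← G.line_comm hPQ, G.line_eq_of_mem hRP.symm hQR hPQ.symm,
      hK.card_inter_line hP hR hRP.symm, hK.tangentPoints_inter_line hP hR hRP.symm hQR,
      card_empty]

lemma sum_planeDefect_pencil {l : Finset α} (hl : l ∈ G.lines) :
    ∑ π ∈ G.pencil l, G.planeDefect K π Q =
      G.defect K Q + 2 * q - q * (#(K ∩ l) + #(G.tangentPoints K Q ∩ l)) := by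
  have h := sum_card_inter_pencil hl (G.tangentPoints K Q)
  zify at h
  simp only [planeDefect, defect]
  rw [sum_sub_distrib, sum_planeTangentDegree hl, h]
  ring

lemma IsCap.sum_planeDefect (hK : G.IsCap K) (hP : P ∈ K) (hQ : Q ∉ K) :
    ∑ π ∈ G.pencil (G.line Q P), G.planeDefect K π Q = G.defect K Q := by
  have hl := G.line_mem_lines (show Q ≠ P from fun h ↦ hQ (h ▸ hP))
  have h_two := hK.card_inter_line_add_card_tangentPoints hP hQ
  zify at h_two
  rw [sum_planeDefect_pencil hl]
  linear_combination - q * h_two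

lemma IsCap.sum_planeDefect_of_mem_line (hK : G.IsCap K) (hP : P ∈ K) (hPR : P ≠ R)
    (hQ : Q ∈ G.line P R) (hQK : Q ∉ K) :
    ∑ π ∈ G.pencil (G.line P R), G.planeDefect K π Q = G.defect K Q := by
  have hPQ : P ≠ Q := fun h ↦ hQK (h ▸ hP)
  rw [← hK.sum_planeDefect hP hQK, ← G.line_comm hPQ, G.line_eq_of_mem hPR hQ hPQ.symm]

lemma tangentPoints_inter_eq (h : K ∩ W ⊆ G.tangentPoints K Q) :
    G.tangentPoints K Q ∩ W = K ∩ W := by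
  rw [tangentPoints_inter, filter_true_of_mem h]

lemma IsFlat.exists_secant (hW : G.IsFlat W) (hQW : Q ∈ W) (hQ : Q ∉ K)
    (h : ¬ K ∩ W ⊆ G.tangentPoints K Q) :
    ∃ P ∈ K ∩ W, ∃ R ∈ K ∩ W, P ≠ R ∧ Q ∈ G.line P R := by
  contrapose! h
  intro P hP
  obtain ⟨hPK, hPW⟩ := mem_inter.mp hP
  refine mem_tangentPoints.mpr ⟨hPK, fun R hR hRP hQR ↦ h P hP R ?_ hRP.symm hQR⟩
  exact mem_inter.mpr ⟨hR, hW.mem_of_mem_line hPW hQW (fun h' ↦ hQ (h' ▸ hPK)) hRP hQR⟩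

lemma IsSegreCap.card_tangentPoints_add_card_le (hK : G.IsSegreCap K) (hπ : π ∈ G.planes)
    (hQπ : Q ∈ π) (hQ : Q ∉ K) (h : ¬ K ∩ π ⊆ G.tangentPoints K Q) :
    #(G.tangentPoints K Q ∩ π) + #(K ∩ π) ≤ q + 2 := by
  obtain ⟨P, hP, R, hR, hPR, hQR⟩ := (isFlat_of_mem_planes hπ).exists_secant hQπ hQ h
  exact hK.segre_bound π hπ Q hQπ hQ P hP R hR hPR hQR

lemma IsSegreCap.planeDefect_nonneg (hK : G.IsSegreCap K) (hπ : π ∈ G.planes) (hQπ : Q ∈ π)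
    (hQ : Q ∉ K) (h : ¬ K ∩ π ⊆ G.tangentPoints K Q) : 0 ≤ G.planeDefect K π Q := by
  have := hK.card_tangentPoints_add_card_le hπ hQπ hQ h
  simp only [planeDefect, planeTangentDegree]
  lia

lemma IsSegreCap.defect_nonneg (hK : G.IsSegreCap K) (hQ : Q ∉ K) : 0 ≤ G.defect K Q := by
  obtain ⟨P, hP, R, hR, hPR, hQR⟩ := hK.exists_secant Q hQ
  rw [← hK.isCap.sum_planeDefect_of_mem_line hP hPR hQR hQ]
  refine sum_nonneg fun π hπ ↦ ?_
  obtain ⟨hπ, h_sub⟩ := mem_pencil.mp hπ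
  exact hK.planeDefect_nonneg hπ (h_sub hQR) hQ fun h ↦
    notMem_tangentPoints_of_mem_line hR hPR.symm hQR
      (h (mem_inter.mpr ⟨hP, h_sub (G.left_mem_line P R)⟩))

lemma IsCap.card_line_sdiff (hK : G.IsCap K) (hP : P ∈ K) (hR : R ∈ K) (hPR : P ≠ R) :
    (#(G.line P R \ K) : ℤ) = q - 1 := by
  have h := card_sdiff_add_card_inter (G.line P R) K
  rw [inter_comm, hK.card_inter_line hP hR hPR, G.card_line (G.line_mem_lines hPR)] at h
  lia

lemma IsCap.sum_line_planeDefect (hK : G.IsCap K) (hπ : π ∈ G.planes) (hP : P ∈ K ∩ π)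
    (hR : R ∈ K ∩ π) (hPR : P ≠ R) :
    ∑ Q ∈ G.line P R \ K, G.planeDefect K π Q =
      planeTangentDegree q K π * (planeTangentDegree q K π - 1) := by
  simp only [planeDefect, planeTangentDegree]
  rw [sum_sub_distrib, sum_const, hK.sum_card_tangentPoints_secant hπ hP hR hPR, nsmul_eq_mul,
    hK.card_line_sdiff (mem_of_mem_inter_left hP) (mem_of_mem_inter_left hR) hPR]
  ring

lemma IsCap.sum_line_defect (hK : G.IsCap K) (hP : P ∈ K) (hR : R ∈ K) (hPR : P ≠ R) :
    ∑ Q ∈ G.line P R \ K, G.defect K Q = ∑ π ∈ G.pencil (G.line P R),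
      planeTangentDegree q K π * (planeTangentDegree q K π - 1) := by
  have h_defect : ∀ Q ∈ G.line P R \ K,
      G.defect K Q = ∑ π ∈ G.pencil (G.line P R), G.planeDefect K π Q := fun Q hQ ↦
    have ⟨hQl, hQK⟩ := mem_sdiff.mp hQ
    (hK.sum_planeDefect_of_mem_line hP hPR hQl hQK).symm
  rw [sum_congr rfl h_defect, sum_comm]
  refine sum_congr rfl fun π hπ ↦ ?_
  obtain ⟨hπ, h_sub⟩ := mem_pencil.mp hπ
  exact hK.sum_line_planeDefect hπ (mem_inter.mpr ⟨hP, h_sub (G.left_mem_line P R)⟩)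
    (mem_inter.mpr ⟨hR, h_sub (G.right_mem_line P R)⟩) hPR

lemma IsCap.sum_mul_card_secants (hK : G.IsCap K) (hW : G.IsFlat W) (g : α → ℤ) :
    ∑ Q ∈ W \ K, g Q * (#(K ∩ W) - #(G.tangentPoints K Q ∩ W)) =
      ∑ x ∈ (K ∩ W).offDiag, ∑ Q ∈ G.line x.1 x.2 \ K, g Q := by
  have h_secants : ∀ Q ∈ W \ K, g Q * (#(K ∩ W) - #(G.tangentPoints K Q ∩ W)) =
      ∑ x ∈ (K ∩ W).offDiag with Q ∈ G.line x.1 x.2, g Q := by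
    intro Q hQ
    obtain ⟨hQW, hQK⟩ := mem_sdiff.mp hQ
    have h := hK.card_secants_add_card_tangentPoints hW hQW hQK
    zify at h
    rw [sum_const, nsmul_eq_mul]
    linear_combination - g Q * h
  rw [sum_congr rfl h_secants]
  refine sum_comm' fun Q x ↦ ?_
  simp only [mem_filter, mem_offDiag, mem_inter, mem_sdiff]
  have h_sub := fun h₁ h₂ h₃ ↦ @hW x.1 h₁ x.2 h₂ h₃ Q
  tauto

lemma card_compl_eq (G : ProjectiveThreeSpace α q) (K : Finset α) :
    (#Kᶜ : ℤ) = (q : ℤ) ^ 3 + q ^ 2 + q + 1 - #K := by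
  have h := card_add_card_compl K
  rw [G.card_points] at h
  zify at h
  linear_combination h

lemma IsCap.sum_defect (hK : G.IsCap K) :
    ∑ Q ∈ Kᶜ, G.defect K Q = tangentDegree q K * (q + 1) * ((q : ℤ) ^ 2 + 1 - #K) := by
  have h := hK.sum_card_tangentPoints G.isFlat_univ
  simp only [inter_univ, ← compl_eq_univ_sdiff, card_univ, G.card_points] at h
  simp only [defect]
  rw [sum_sub_distrib, h, sum_const, nsmul_eq_mul, card_compl_eq G, tangentDegree]
  push_cast
  ring

lemma IsCap.sum_offDiag_planeTangentDegree (hK : G.IsCap K) :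
    ∑ x ∈ K.offDiag, ∑ π ∈ G.pencil (G.line x.1 x.2),
        planeTangentDegree q K π * (planeTangentDegree q K π - 1) =
      #K * (tangentDegree q K * (q + 1) * ((q : ℤ) ^ 2 + 1 - #K)) - G.defectMoment K := by
  have h := hK.sum_mul_card_secants G.isFlat_univ (G.defect K)
  simp only [inter_univ, ← compl_eq_univ_sdiff] at h
  rw [← hK.sum_defect, mul_sum, defectMoment, ← sum_sub_distrib]
  refine Eq.trans (sum_congr rfl fun x hx ↦ ?_) (h.symm.trans (sum_congr rfl fun _ _ ↦ by ring))
  obtain ⟨hP, hR, hPR⟩ := mem_offDiag.mp hx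
  exact (hK.sum_line_defect hP hR hPR).symm

lemma IsCap.sum_planeTangentDegree_sub_one (hK : G.IsCap K) (hP : P ∈ K) (hR : R ∈ K)
    (hPR : P ≠ R) :
    ∑ π ∈ G.pencil (G.line P R), (planeTangentDegree q K π - 1) = (q : ℤ) ^ 2 + 1 - #K := by
  rw [sum_sub_distrib, hK.sum_planeTangentDegree_secant hP hR hPR, sum_const,
    card_pencil (G.line_mem_lines hPR), nsmul_eq_mul, tangentDegree]
  push_cast
  ring

lemma IsCap.mul_sum_offDiag (hK : G.IsCap K) (c : ℤ) :
    ∑ x ∈ K.offDiag, ∑ π ∈ G.pencil (G.line x.1 x.2), c * (planeTangentDegree q K π - 1) =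
      c * (#K * (#K - 1) * ((q : ℤ) ^ 2 + 1 - #K)) := by
  have h_term : ∀ x ∈ K.offDiag, ∑ π ∈ G.pencil (G.line x.1 x.2),
      c * (planeTangentDegree q K π - 1) = c * ((q : ℤ) ^ 2 + 1 - #K) := by
    intro x hx
    obtain ⟨hP, hR, hPR⟩ := mem_offDiag.mp hx
    rw [← mul_sum, hK.sum_planeTangentDegree_sub_one hP hR hPR]
  rw [sum_congr rfl h_term, sum_const, nsmul_eq_mul, cast_card_offDiag]
  ring

lemma IsCap.two_mul_le (hK : G.IsCap K) : 2 * (#K * (#K - 1) * ((q : ℤ) ^ 2 + 1 - #K)) ≤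
    #K * (tangentDegree q K * (q + 1) * ((q : ℤ) ^ 2 + 1 - #K)) - G.defectMoment K := by
  rw [← hK.sum_offDiag_planeTangentDegree, ← hK.mul_sum_offDiag]
  refine sum_le_sum fun x _ ↦ sum_le_sum fun π _ ↦ ?_
  rcases le_or_gt (planeTangentDegree q K π) 1 with h | h <;> nlinarith

variable (G) in
/-- The planes meeting `K` in exactly `q` points; their sections are the arcs with two nuclei. -/
def qPlanes (K : Finset α) : Finset (Finset α) := {π ∈ G.planes | #(K ∩ π) = q}

lemma mem_qPlanes : π ∈ G.qPlanes K ↔ π ∈ G.planes ∧ #(K ∩ π) = q := mem_filter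

lemma sum_offDiag_card_qPlanes :
    ∑ x ∈ K.offDiag, (#{π ∈ G.pencil (G.line x.1 x.2) | #(K ∩ π) = q} : ℤ) =
      q * (q - 1) * #(G.qPlanes K) := by
  have h_pencil : ∀ x ∈ K.offDiag,
      ({π ∈ G.pencil (G.line x.1 x.2) | #(K ∩ π) = q} : Finset (Finset α)) =
        {π ∈ G.qPlanes K | x ∈ (K ∩ π).offDiag} := by
    intro x hx
    ext π
    obtain ⟨hP, hR, hPR⟩ := mem_offDiag.mp hx
    have h_sub := fun h ↦ @line_subset_plane _ _ _ _ G π h x.1 x.2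
    have hPl := G.left_mem_line x.1 x.2
    have hRl := G.right_mem_line x.1 x.2
    simp only [mem_filter, mem_pencil, mem_qPlanes, mem_offDiag, mem_inter]
    grind
  have h_plane : ∀ π ∈ G.qPlanes K, (#{x ∈ K.offDiag | x ∈ (K ∩ π).offDiag} : ℤ) = q * (q - 1) := by
    intro π hπ
    rw [filter_mem_eq_inter, inter_eq_right.mpr (offDiag_mono inter_subset_left),
      cast_card_offDiag, (mem_qPlanes.mp hπ).2]
  rw [← Nat.cast_sum, sum_congr rfl fun x hx ↦ congrArg card (h_pencil x hx),
    sum_card_filter_comm _ _ fun x π ↦ x ∈ (K ∩ π).offDiag, Nat.cast_sum, sum_congr rfl h_plane,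
    sum_const, nsmul_eq_mul]
  ring

lemma IsCap.three_mul_le (hK : G.IsCap K) : 3 * (#K * (#K - 1) * ((q : ℤ) ^ 2 + 1 - #K)) ≤
    #K * (tangentDegree q K * (q + 1) * ((q : ℤ) ^ 2 + 1 - #K)) - G.defectMoment K +
      q * (q - 1) * #(G.qPlanes K) := by
  rw [← hK.sum_offDiag_planeTangentDegree, ← hK.mul_sum_offDiag, ← sum_offDiag_card_qPlanes,
    ← sum_add_distrib]
  refine sum_le_sum fun x _ ↦ ?_
  rw [card_filter, Nat.cast_sum, ← sum_add_distrib]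
  refine sum_le_sum fun π _ ↦ ?_
  have h_two : #(K ∩ π) = q ↔ planeTangentDegree q K π = 2 := by rw [planeTangentDegree]; lia
  split_ifs with h
  · rw [h_two.mp h]
    norm_num
  · rcases lt_or_gt_of_ne (fun h' ↦ h (h_two.mpr h')) with h' | h' <;> push_cast <;> nlinarith

lemma IsCap.sum_planeDefect_mul (hK : G.IsCap K) (hπ : π ∈ G.planes) :
    ∑ Q ∈ π \ K, G.planeDefect K π Q * (#(K ∩ π) - #(G.tangentPoints K Q ∩ π)) =
      #(K ∩ π) * (#(K ∩ π) - 1) * (planeTangentDegree q K π * (planeTangentDegree q K π - 1)) := by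
  rw [hK.sum_mul_card_secants (isFlat_of_mem_planes hπ), ← cast_card_offDiag, ← nsmul_eq_mul,
    ← sum_const]
  refine sum_congr rfl fun x hx ↦ ?_
  obtain ⟨hP, hR, hPR⟩ := mem_offDiag.mp hx
  exact hK.sum_line_planeDefect hπ hP hR hPR

lemma IsSegreCap.card_tangentPoints_of_mem_qPlanes (hK : G.IsSegreCap K) (hq : Even q)
    (hπ : π ∈ G.qPlanes K) (hQπ : Q ∈ π) (hQ : Q ∉ K) (h : ¬ K ∩ π ⊆ G.tangentPoints K Q) :
    #(G.tangentPoints K Q ∩ π) = 0 ∨ #(G.tangentPoints K Q ∩ π) = 2 := by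
  obtain ⟨hπ, hπ_card⟩ := mem_qPlanes.mp hπ
  have h_le := hK.card_tangentPoints_add_card_le hπ hQπ hQ h
  have h_even := (hK.isCap.even_card_tangentPoints_iff (isFlat_of_mem_planes hπ) hQπ hQ).mpr
    (hπ_card ▸ hq)
  grind

/-- Summing `σ (σ - 2)`, which vanishes unless `σ = q`, over the points of the plane counts the
nuclei. -/
lemma IsSegreCap.card_nuclei (hK : G.IsSegreCap K) (hq : 2 < q) (hq_even : Even q)
    (hπ : π ∈ G.qPlanes K) : #{Q ∈ π \ K | K ∩ π ⊆ G.tangentPoints K Q} = 2 := by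
  have h_points := fun Q (hQ : Q ∈ π \ K) ↦
    hK.card_tangentPoints_of_mem_qPlanes hq_even hπ (mem_sdiff.mp hQ).1 (mem_sdiff.mp hQ).2
  obtain ⟨hπ, hπ_card⟩ := mem_qPlanes.mp hπ
  have h_mul := hK.isCap.sum_planeDefect_mul hπ
  have h_sum := hK.isCap.sum_card_tangentPoints (isFlat_of_mem_planes hπ)
  have h_card : (#(π \ K) : ℤ) = q ^ 2 + 1 := by
    have h := card_sdiff_add_card_inter π K
    rw [inter_comm, hπ_card, G.card_plane hπ] at h
    lia
  simp only [planeDefect, planeTangentDegree, hπ_card, G.card_plane hπ] at h_mul h_sum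
  have h_term : ∀ Q ∈ π \ K, (if K ∩ π ⊆ G.tangentPoints K Q then (q : ℤ) * (q - 2) else 0) =
      (q + 2 - q - #(G.tangentPoints K Q ∩ π)) * (q - #(G.tangentPoints K Q ∩ π)) +
        q * #(G.tangentPoints K Q ∩ π) - 2 * q := by
    intro Q hQ
    split_ifs with h
    · rw [tangentPoints_inter_eq h, hπ_card]
      ring
    · rcases h_points Q hQ h with h | h <;> rw [h] <;> ring
  have h_count := sum_congr rfl h_term
  rw [sum_sub_distrib, sum_add_distrib, h_mul, ← mul_sum, h_sum, ← sum_filter, sum_const,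
    sum_const, nsmul_eq_mul, nsmul_eq_mul, h_card] at h_count
  have h_pos : (0 : ℤ) < q * (q - 2) := mul_pos (by lia) (by lia)
  refine Nat.cast_injective (R := ℤ) (mul_right_cancel₀ h_pos.ne' (h_count.trans ?_))
  push_cast
  ring

variable (G) in
/-- The planes meeting `K` in `q` points and having `Q` as one of their two nuclei. -/
noncomputable def nuclearPlanes (K : Finset α) (Q : α) : Finset (Finset α) :=
  {π ∈ G.qPlanes K | Q ∈ π ∧ K ∩ π ⊆ G.tangentPoints K Q}

lemma mem_nuclearPlanes : π ∈ G.nuclearPlanes K Q ↔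
    π ∈ G.planes ∧ #(K ∩ π) = q ∧ Q ∈ π ∧ K ∩ π ⊆ G.tangentPoints K Q := by
  rw [nuclearPlanes, mem_filter, mem_qPlanes, and_assoc]

lemma IsSegreCap.two_mul_card_qPlanes (hK : G.IsSegreCap K) (hq : 2 < q) (hq_even : Even q) :
    2 * #(G.qPlanes K) = ∑ Q ∈ Kᶜ, #(G.nuclearPlanes K Q) := by
  have h_nuclei : ∀ π ∈ G.qPlanes K,
      #{Q ∈ Kᶜ | Q ∈ π ∧ K ∩ π ⊆ G.tangentPoints K Q} = 2 := by
    intro π hπ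
    rw [← hK.card_nuclei hq hq_even hπ]
    refine congrArg card (ext fun Q ↦ ?_)
    simp only [mem_filter, mem_compl, mem_sdiff]
    tauto
  simp only [nuclearPlanes]
  rw [sum_card_filter_comm _ _ fun Q π ↦ Q ∈ π ∧ K ∩ π ⊆ G.tangentPoints K Q,
    sum_congr rfl h_nuclei, sum_const, smul_eq_mul, mul_comm]

end ProjectiveThreeSpace

/-! ### Points that are nuclei of two plane sections -/

namespace ProjectiveThreeSpace

variable {α : Type*} [Fintype α] [DecidableEq α] {q : ℕ} {G : ProjectiveThreeSpace α q}
variable {K π π' π₁ π₂ : Finset α} {P Q R : α}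

lemma eq_of_mem_tangentPoints {l : Finset α} (hl : l ∈ G.lines) (hQl : Q ∈ l)
    (hP : P ∈ G.tangentPoints K Q) (hPl : P ∈ l) (hR : R ∈ K) (hRl : R ∈ l) : R = P := by
  by_contra hRP
  exact notMem_tangentPoints_of_mem_line hR hRP (G.eq_line hl hPl hRl (Ne.symm hRP) ▸ hQl) hP

lemma eq_of_mem_planes {l : Finset α} (hl : l ∈ G.lines) (hπ : π ∈ G.planes) (hπ' : π' ∈ G.planes)
    (hlπ : l ⊆ π) (hlπ' : l ⊆ π') (hP : P ∉ l) (hPπ : P ∈ π) (hPπ' : P ∈ π') : π = π' :=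
  card_le_one.mp (G.card_planes_through_of_notMem hl hP).le π (mem_filter.mpr ⟨hπ, hlπ, hPπ⟩) π'
    (mem_filter.mpr ⟨hπ', hlπ', hPπ'⟩)

lemma card_lines_through_le (hq : 0 < q) (hπ : π ∈ G.planes) (hQ : Q ∈ π)
    {L : Finset (Finset α)} (hL : ∀ l ∈ L, l ∈ G.lines ∧ Q ∈ l ∧ l ⊆ π) : #L ≤ q + 1 := by
  have h_disj : (L : Set (Finset α)).PairwiseDisjoint fun l ↦ l.erase Q := by
    intro l hl m hm hlm
    refine disjoint_left.mpr fun P hPl hPm ↦ hlm ?_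
    obtain ⟨hPQ, hPl⟩ := mem_erase.mp hPl
    exact G.eq_of_mem_lines (hL l hl).1 (hL m hm).1 hPQ hPl (hL l hl).2.1 (mem_of_mem_erase hPm)
      (hL m hm).2.1
  have h_sub : L.biUnion (fun l ↦ l.erase Q) ⊆ π.erase Q :=
    biUnion_subset.mpr fun l hl ↦ erase_subset_erase Q (hL l hl).2.2
  have h_card : ∀ l ∈ L, #(l.erase Q) = q := fun l hl ↦ by
    rw [card_erase_of_mem (hL l hl).2.1, G.card_line (hL l hl).1, Nat.add_sub_cancel]
  have h_le := card_le_card h_sub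
  rw [card_biUnion h_disj, sum_congr rfl h_card, sum_const, smul_eq_mul, card_erase_of_mem hQ,
    G.card_plane hπ, Nat.add_sub_cancel] at h_le
  nlinarith

lemma card_inter_inter_le_one (hπ : π ∈ G.nuclearPlanes K Q) (hπ' : π' ∈ G.planes) (hQ : Q ∈ π')
    (hne : π' ≠ π) : #(K ∩ (π' ∩ π)) ≤ 1 := by
  obtain ⟨hπ, -, hQπ, h_sub⟩ := mem_nuclearPlanes.mp hπ
  refine card_le_one.mpr fun P hP R hR ↦ ?_
  obtain ⟨hPK, hP⟩ := mem_inter.mp hP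
  obtain ⟨hRK, hR⟩ := mem_inter.mp hR
  exact eq_of_mem_tangentPoints (G.inter_mem_lines hπ' hπ hne) (mem_inter.mpr ⟨hQ, hQπ⟩)
    (h_sub (mem_inter.mpr ⟨hRK, (mem_inter.mp hR).2⟩)) hR hPK hP

variable (G) in
/-- The tangent points of `K` from `Q` lying on neither `π₁` nor `π₂`. -/
noncomputable def outerPoints (K : Finset α) (Q : α) (π₁ π₂ : Finset α) : Finset α :=
  G.tangentPoints K Q \ (π₁ ∪ π₂)

lemma mem_outerPoints : P ∈ G.outerPoints K Q π₁ π₂ ↔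
    P ∈ G.tangentPoints K Q ∧ P ∉ π₁ ∧ P ∉ π₂ := by
  rw [outerPoints, mem_sdiff, mem_union, not_or]

lemma card_tangentPoints_add_card_inter (h₁ : π₁ ∈ G.nuclearPlanes K Q)
    (h₂ : π₂ ∈ G.nuclearPlanes K Q) :
    #(G.tangentPoints K Q) + #(K ∩ (π₁ ∩ π₂)) = 2 * q + #(G.outerPoints K Q π₁ π₂) := by
  obtain ⟨-, h₁_card, -, h₁⟩ := mem_nuclearPlanes.mp h₁
  obtain ⟨-, h₂_card, -, h₂⟩ := mem_nuclearPlanes.mp h₂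
  have h_split := card_inter_add_card_sdiff (G.tangentPoints K Q) (π₁ ∪ π₂)
  have h_union := card_union_add_card_inter (K ∩ π₁) (K ∩ π₂)
  rw [inter_union_distrib_left, tangentPoints_inter_eq h₁, tangentPoints_inter_eq h₂] at h_split
  rw [← outerPoints] at h_split
  rw [← inter_inter_distrib_left, h₁_card, h₂_card] at h_union
  lia

lemma eq_of_nuclear_of_external (hQ : Q ∉ K) (hπ : π ∈ G.nuclearPlanes K Q) (hq : 0 < q)
    {l m : Finset α} (hl : l ∈ G.lines) (hm : m ∈ G.lines) (hlπ : l ⊆ π) (hmπ : m ⊆ π)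
    (hQl : Q ∈ l) (hQm : Q ∈ m) (hKl : K ∩ l = ∅) (hKm : K ∩ m = ∅) : l = m := by
  obtain ⟨hπ, h_card, hQπ, h_sub⟩ := mem_nuclearPlanes.mp hπ
  have h_ne : ∀ P ∈ K, Q ≠ P := fun P hP h ↦ hQ (h ▸ hP)
  have h_inj : Set.InjOn (G.line Q) (K ∩ π : Finset α) := fun P hP R hR hPR ↦
    eq_of_mem_tangentPoints (G.line_mem_lines (h_ne R (mem_inter.mp hR).1)) (G.left_mem_line Q R)
      (h_sub hR) (G.right_mem_line Q R) (mem_inter.mp hP).1 (hPR ▸ G.right_mem_line Q P)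
  have h_notMem : ∀ n, K ∩ n = ∅ → n ∉ (K ∩ π).image (G.line Q) := by
    rintro n hn h
    obtain ⟨P, hP, rfl⟩ := mem_image.mp h
    exact eq_empty_iff_forall_notMem.mp hn P
      (mem_inter.mpr ⟨(mem_inter.mp hP).1, G.right_mem_line Q P⟩)
  by_contra hlm
  have h_le := card_lines_through_le (L := insert l (insert m ((K ∩ π).image (G.line Q)))) hq hπ
    hQπ <| by
      simp only [mem_insert, mem_image, mem_inter]
      rintro n (rfl | rfl | ⟨P, ⟨hP, hPπ⟩, rfl⟩)
      · exact ⟨hl, hQl, hlπ⟩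
      · exact ⟨hm, hQm, hmπ⟩
      · exact ⟨G.line_mem_lines (h_ne P hP), G.left_mem_line Q P,
          G.line_subset_plane hπ hQπ hPπ (h_ne P hP)⟩
  rw [card_insert_of_notMem (by simp only [mem_insert, hlm, h_notMem l hKl, or_self,
    not_false_eq_true]), card_insert_of_notMem (h_notMem m hKm), card_image_of_injOn h_inj,
    h_card] at h_le
  lia

lemma IsSegreCap.card_nuclearPlanes_le_two (hK : G.IsSegreCap K) (hQ : Q ∉ K)
    (ht : tangentDegree q K < 3 * q - 3) : #(G.nuclearPlanes K Q) ≤ 2 := by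
  by_contra! h
  obtain ⟨π₁, h₁, π₂, h₂, π₃, h₃, h₁₂, h₁₃, h₂₃⟩ := two_lt_card.mp h
  have h_sum := card_tangentPoints_add_card_inter h₁ h₂
  obtain ⟨hπ₁, -, hQ₁, -⟩ := mem_nuclearPlanes.mp h₁
  have h_inter := card_inter_inter_le_one h₂ hπ₁ hQ₁ h₁₂
  obtain ⟨hπ₃, h_card, hQ₃, h_sub⟩ := mem_nuclearPlanes.mp h₃
  have h_le₁ := card_inter_inter_le_one h₁ hπ₃ hQ₃ h₁₃.symm
  have h_le₂ := card_inter_inter_le_one h₂ hπ₃ hQ₃ h₂₃.symm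
  have h_cover : K ∩ π₃ ⊆ G.outerPoints K Q π₁ π₂ ∪ (K ∩ (π₃ ∩ π₁) ∪ K ∩ (π₃ ∩ π₂)) := by
    intro P hP
    have := h_sub hP
    simp only [mem_union, mem_outerPoints, mem_inter] at hP ⊢
    tauto
  have h_le := (card_le_card h_cover).trans (card_union_le _ _)
  have h_le' := card_union_le (K ∩ (π₃ ∩ π₁)) (K ∩ (π₃ ∩ π₂))
  have h_nonneg := hK.defect_nonneg hQ
  rw [defect] at h_nonneg
  lia

lemma IsCap.even_defect (hK : G.IsCap K) (hq : Even q) (hQ : Q ∉ K) : Even (G.defect K Q) := by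
  have h_parity := hK.even_card_tangentPoints_iff G.isFlat_univ (mem_univ Q) hQ
  rw [inter_univ, inter_univ] at h_parity
  have hq_int : Even (q : ℤ) := by exact_mod_cast hq
  have h_parity : Even (#(G.tangentPoints K Q) : ℤ) ↔ Even (#K : ℤ) := by exact_mod_cast h_parity
  simp only [defect, tangentDegree, Int.even_sub, Int.even_add, Int.even_pow, hq_int]
  grind

lemma planeDefect_of_subset (h : K ∩ π ⊆ G.tangentPoints K Q) :
    G.planeDefect K π Q = q + 2 - 2 * #(K ∩ π) := by
  rw [planeDefect, planeTangentDegree, tangentPoints_inter_eq h]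
  ring

variable (G) in
/-- The planes through `Q` in which `K` has a secant through `Q`. -/
noncomputable def secantPlanes (K : Finset α) (Q : α) : Finset (Finset α) :=
  {π ∈ G.planes | Q ∈ π ∧ ¬ K ∩ π ⊆ G.tangentPoints K Q}

lemma mem_secantPlanes : π ∈ G.secantPlanes K Q ↔
    π ∈ G.planes ∧ Q ∈ π ∧ ¬ K ∩ π ⊆ G.tangentPoints K Q := mem_filter

variable (G) in
/-- The point `Q` is a nucleus of the two plane sections `K ∩ π₁` and `K ∩ π₂` of size `q`, while
its defect is at most `q / 2` and the tangent degree of `K` is at most `9 * q / 4 - 4`. -/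
structure IsBinucleus (K : Finset α) (Q : α) (π₁ π₂ : Finset α) : Prop where
  isSegreCap : G.IsSegreCap K
  notMem : Q ∉ K
  left_mem : π₁ ∈ G.nuclearPlanes K Q
  right_mem : π₂ ∈ G.nuclearPlanes K Q
  ne : π₁ ≠ π₂
  tangentDegree_le : 4 * tangentDegree q K ≤ 9 * q - 16
  defect_le : 2 * G.defect K Q ≤ q

namespace IsBinucleus

lemma inter_mem_lines (h : G.IsBinucleus K Q π₁ π₂) : π₁ ∩ π₂ ∈ G.lines :=
  G.inter_mem_lines (mem_nuclearPlanes.mp h.left_mem).1 (mem_nuclearPlanes.mp h.right_mem).1 h.ne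

lemma mem_inter_planes (h : G.IsBinucleus K Q π₁ π₂) : Q ∈ π₁ ∩ π₂ :=
  mem_inter.mpr ⟨(mem_nuclearPlanes.mp h.left_mem).2.2.1, (mem_nuclearPlanes.mp h.right_mem).2.2.1⟩

lemma card_axis_le_one (h : G.IsBinucleus K Q π₁ π₂) : #(K ∩ (π₁ ∩ π₂)) ≤ 1 := by
  obtain ⟨hπ₁, -, hQ₁, -⟩ := mem_nuclearPlanes.mp h.left_mem
  exact card_inter_inter_le_one h.right_mem hπ₁ hQ₁ h.ne

lemma axis_subset_tangentPoints (h : G.IsBinucleus K Q π₁ π₂) :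
    K ∩ (π₁ ∩ π₂) ⊆ G.tangentPoints K Q :=
  (inter_subset_inter_left inter_subset_left).trans (mem_nuclearPlanes.mp h.left_mem).2.2.2

lemma four_mul_card_outerPoints_add_le (h : G.IsBinucleus K Q π₁ π₂) :
    4 * #(G.outerPoints K Q π₁ π₂) + 12 ≤ q := by
  have h_sum := card_tangentPoints_add_card_inter h.left_mem h.right_mem
  have h_axis := h.card_axis_le_one
  have h_nonneg := h.isSegreCap.defect_nonneg h.notMem
  have ht := h.tangentDegree_le
  rw [defect] at h_nonneg
  lia

lemma card_tangentPoints_inter_le (h : G.IsBinucleus K Q π₁ π₂) (hπ : π ∈ G.planes) (hQ : Q ∈ π)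
    (hπ₁ : π ≠ π₁) (hπ₂ : π ≠ π₂) :
    #(G.tangentPoints K Q ∩ π) ≤ 2 + #(G.outerPoints K Q π₁ π₂ ∩ π) := by
  have h₁ := card_inter_inter_le_one h.left_mem hπ hQ hπ₁
  have h₂ := card_inter_inter_le_one h.right_mem hπ hQ hπ₂
  have h_cover : G.tangentPoints K Q ∩ π ⊆
      (K ∩ (π ∩ π₁) ∪ K ∩ (π ∩ π₂)) ∪ G.outerPoints K Q π₁ π₂ ∩ π := by
    intro P hP
    have := tangentPoints_subset (mem_inter.mp hP).1
    simp only [mem_union, mem_outerPoints, mem_inter] at hP ⊢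
    tauto
  have h_le := (card_le_card h_cover).trans (card_union_le _ _)
  have h_le' := card_union_le (K ∩ (π ∩ π₁)) (K ∩ (π ∩ π₂))
  lia

lemma mem_axis_of_mem (h : G.IsBinucleus K Q π₁ π₂) (hπ : π ∈ G.planes)
    (h_axis : π₁ ∩ π₂ ⊆ π) (hπ₁ : π ≠ π₁) (hπ₂ : π ≠ π₂) (hP : P ∈ π) (hP' : P ∈ π₁ ∪ π₂) :
    P ∈ π₁ ∩ π₂ := by
  by_contra hP_axis
  obtain ⟨h₁, -⟩ := mem_nuclearPlanes.mp h.left_mem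
  obtain ⟨h₂, -⟩ := mem_nuclearPlanes.mp h.right_mem
  rcases mem_union.mp hP' with hP' | hP'
  · exact hπ₁ (eq_of_mem_planes h.inter_mem_lines hπ h₁ h_axis inter_subset_left hP_axis hP hP')
  · exact hπ₂ (eq_of_mem_planes h.inter_mem_lines hπ h₂ h_axis inter_subset_right hP_axis hP hP')

lemma card_tangentPoints_inter_le_of_axis_subset (h : G.IsBinucleus K Q π₁ π₂) (hπ : π ∈ G.planes)
    (h_axis : π₁ ∩ π₂ ⊆ π) (hπ₁ : π ≠ π₁) (hπ₂ : π ≠ π₂) :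
    #(G.tangentPoints K Q ∩ π) ≤ #(K ∩ (π₁ ∩ π₂)) + #(G.outerPoints K Q π₁ π₂ ∩ π) := by
  have h_cover : G.tangentPoints K Q ∩ π ⊆
      K ∩ (π₁ ∩ π₂) ∪ G.outerPoints K Q π₁ π₂ ∩ π := by
    intro P hP
    obtain ⟨hPT, hPπ⟩ := mem_inter.mp hP
    by_cases hP' : P ∈ π₁ ∪ π₂
    · exact mem_union_left _ (mem_inter.mpr ⟨tangentPoints_subset hPT,
        h.mem_axis_of_mem hπ h_axis hπ₁ hπ₂ hPπ hP'⟩)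
    · exact mem_union_right _ (mem_inter.mpr ⟨mem_sdiff.mpr ⟨hPT, hP'⟩, hPπ⟩)
  exact (card_le_card h_cover).trans (card_union_le _ _)

lemma defect_lt_planeDefect_of_subset (h : G.IsBinucleus K Q π₁ π₂) (hπ : π ∈ G.planes)
    (hQ : Q ∈ π) (hπ₁ : π ≠ π₁) (hπ₂ : π ≠ π₂) (hT : K ∩ π ⊆ G.tangentPoints K Q) :
    G.defect K Q < G.planeDefect K π Q := by
  have h_le := h.card_tangentPoints_inter_le hπ hQ hπ₁ hπ₂
  have h_outer := h.four_mul_card_outerPoints_add_le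
  have h_inter := card_le_card (inter_subset_left (s₁ := G.outerPoints K Q π₁ π₂) (s₂ := π))
  have h_defect := h.defect_le
  rw [tangentPoints_inter_eq hT] at h_le
  rw [planeDefect_of_subset hT]
  lia

lemma planeDefect_nonneg (h : G.IsBinucleus K Q π₁ π₂) (hπ : π ∈ G.planes) (hQ : Q ∈ π)
    (hπ₁ : π ≠ π₁) (hπ₂ : π ≠ π₂) : 0 ≤ G.planeDefect K π Q := by
  by_cases hT : K ∩ π ⊆ G.tangentPoints K Q
  · exact (h.isSegreCap.defect_nonneg h.notMem).trans
      (h.defect_lt_planeDefect_of_subset hπ hQ hπ₁ hπ₂ hT).le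
  · exact h.isSegreCap.planeDefect_nonneg hπ hQ h.notMem hT

lemma planeDefect_left (h : G.IsBinucleus K Q π₁ π₂) : G.planeDefect K π₁ Q = 2 - q := by
  obtain ⟨-, h_card, -, h_sub⟩ := mem_nuclearPlanes.mp h.left_mem
  rw [planeDefect_of_subset h_sub, h_card]
  ring

lemma symm (h : G.IsBinucleus K Q π₁ π₂) : G.IsBinucleus K Q π₂ π₁ :=
  { h with left_mem := h.right_mem, right_mem := h.left_mem, ne := h.ne.symm }

lemma planeDefect_le_defect_of_mem (h : G.IsBinucleus K Q π₁ π₂) (hπ : π ∈ G.planes) (hQ : Q ∈ π)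
    (hP : P ∈ K \ (π₁ ∪ π₂)) (hPπ : P ∈ π) : G.planeDefect K π Q ≤ G.defect K Q := by
  obtain ⟨hPK, hP⟩ := mem_sdiff.mp hP
  have hQP : Q ≠ P := fun h' ↦ h.notMem (h' ▸ hPK)
  rw [← h.isSegreCap.isCap.sum_planeDefect hPK h.notMem]
  refine single_le_sum (f := fun π ↦ G.planeDefect K π Q) (fun π' hπ' ↦ ?_)
    (mem_pencil.mpr ⟨hπ, G.line_subset_plane hπ hQ hPπ hQP⟩)
  obtain ⟨hπ', h_sub⟩ := mem_pencil.mp hπ'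
  have hPπ' := h_sub (G.right_mem_line Q P)
  exact h.planeDefect_nonneg hπ' (h_sub (G.left_mem_line Q P))
    (fun h' ↦ hP (mem_union_left _ (h' ▸ hPπ'))) fun h' ↦ hP (mem_union_right _ (h' ▸ hPπ'))

lemma not_subset_of_mem (h : G.IsBinucleus K Q π₁ π₂) (hπ : π ∈ G.planes) (hQ : Q ∈ π)
    (hP : P ∈ K \ (π₁ ∪ π₂)) (hPπ : P ∈ π) : ¬ K ∩ π ⊆ G.tangentPoints K Q := by
  intro hT
  have hP' := (mem_sdiff.mp hP).2
  exact (h.planeDefect_le_defect_of_mem hπ hQ hP hPπ).not_gt <|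
    h.defect_lt_planeDefect_of_subset hπ hQ (fun h' ↦ hP' (mem_union_left _ (h' ▸ hPπ)))
      (fun h' ↦ hP' (mem_union_right _ (h' ▸ hPπ))) hT

lemma outerPoints_subset : G.outerPoints K Q π₁ π₂ ⊆ K \ (π₁ ∪ π₂) :=
  sdiff_subset_sdiff tangentPoints_subset Subset.rfl

lemma outerPoints_inter_eq_empty (h : G.IsBinucleus K Q π₁ π₂) (hπ : π ∈ G.planes) (hQ : Q ∈ π)
    (hT : K ∩ π ⊆ G.tangentPoints K Q) : G.outerPoints K Q π₁ π₂ ∩ π = ∅ := by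
  refine eq_empty_of_forall_notMem fun P hP ↦ ?_
  obtain ⟨hP, hPπ⟩ := mem_inter.mp hP
  exact h.not_subset_of_mem hπ hQ (outerPoints_subset hP) hPπ hT

lemma sdiff_tangentPoints_subset (h : G.IsBinucleus K Q π₁ π₂) :
    K \ G.tangentPoints K Q ⊆ K \ (π₁ ∪ π₂) := by
  intro P hP
  obtain ⟨hPK, hPT⟩ := mem_sdiff.mp hP
  refine mem_sdiff.mpr ⟨hPK, fun hP ↦ hPT ?_⟩
  rcases mem_union.mp hP with hP | hP
  · exact (mem_nuclearPlanes.mp h.left_mem).2.2.2 (mem_inter.mpr ⟨hPK, hP⟩)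
  · exact (mem_nuclearPlanes.mp h.right_mem).2.2.2 (mem_inter.mpr ⟨hPK, hP⟩)

lemma planeDefect_le_defect (h : G.IsBinucleus K Q π₁ π₂) (hπ : π ∈ G.secantPlanes K Q) :
    G.planeDefect K π Q ≤ G.defect K Q := by
  obtain ⟨hπ, hQ, hT⟩ := mem_secantPlanes.mp hπ
  obtain ⟨P, hP, hPT⟩ := not_subset.mp hT
  obtain ⟨hPK, hPπ⟩ := mem_inter.mp hP
  exact h.planeDefect_le_defect_of_mem hπ hQ
    (h.sdiff_tangentPoints_subset (mem_sdiff.mpr ⟨hPK, hPT⟩)) hPπ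

lemma ne_of_mem_secantPlanes (h : G.IsBinucleus K Q π₁ π₂) (hπ : π ∈ G.secantPlanes K Q) :
    π ≠ π₁ ∧ π ≠ π₂ := by
  obtain ⟨-, -, hT⟩ := mem_secantPlanes.mp hπ
  exact ⟨fun h' ↦ hT (h' ▸ (mem_nuclearPlanes.mp h.left_mem).2.2.2),
    fun h' ↦ hT (h' ▸ (mem_nuclearPlanes.mp h.right_mem).2.2.2)⟩

lemma planeDefect_nonneg_of_mem_secantPlanes (h : G.IsBinucleus K Q π₁ π₂)
    (hπ : π ∈ G.secantPlanes K Q) : 0 ≤ G.planeDefect K π Q := by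
  obtain ⟨hπ, hQ, hT⟩ := mem_secantPlanes.mp hπ
  exact h.isSegreCap.planeDefect_nonneg hπ hQ h.notMem hT

lemma sum_secantPlanes_planeDefect (h : G.IsBinucleus K Q π₁ π₂) (hP : P ∈ K \ (π₁ ∪ π₂)) :
    ∑ π ∈ G.secantPlanes K Q with P ∈ π, G.planeDefect K π Q = G.defect K Q := by
  have hPK := (mem_sdiff.mp hP).1
  have hQP : Q ≠ P := fun h' ↦ h.notMem (h' ▸ hPK)
  rw [← h.isSegreCap.isCap.sum_planeDefect hPK h.notMem]
  refine sum_congr (ext fun π ↦ ?_) fun _ _ ↦ rfl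
  rw [mem_filter, mem_secantPlanes, mem_pencil]
  constructor
  · rintro ⟨⟨hπ, hQ, -⟩, hPπ⟩
    exact ⟨hπ, G.line_subset_plane hπ hQ hPπ hQP⟩
  · rintro ⟨hπ, h_sub⟩
    have hQ := h_sub (G.left_mem_line Q P)
    have hPπ := h_sub (G.right_mem_line Q P)
    exact ⟨⟨hπ, hQ, h.not_subset_of_mem hπ hQ hP hPπ⟩, hPπ⟩

lemma sum_planeDefect_mul_card_inter (h : G.IsBinucleus K Q π₁ π₂) {S : Finset α}
    (hS : S ⊆ K \ (π₁ ∪ π₂)) :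
    ∑ π ∈ G.secantPlanes K Q, G.planeDefect K π Q * #(S ∩ π) = G.defect K Q * #S := by
  rw [sum_mul_card_inter, sum_congr rfl fun P hP ↦ h.sum_secantPlanes_planeDefect (hS hP),
    sum_const, nsmul_eq_mul, mul_comm]

lemma planeDefect_of_axis_subset (h : G.IsBinucleus K Q π₁ π₂) (hπ : π ∈ G.planes)
    (h_axis : π₁ ∩ π₂ ⊆ π) (hπ₁ : π ≠ π₁) (hπ₂ : π ≠ π₂) (hT : K ∩ π ⊆ G.tangentPoints K Q) :
    G.planeDefect K π Q = q + 2 - 2 * #(K ∩ (π₁ ∩ π₂)) := by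
  have h_le := h.card_tangentPoints_inter_le_of_axis_subset hπ h_axis hπ₁ hπ₂
  rw [tangentPoints_inter_eq hT,
    h.outerPoints_inter_eq_empty hπ (h_axis h.mem_inter_planes) hT, card_empty, add_zero] at h_le
  rw [planeDefect_of_subset hT, h_le.antisymm (card_le_card (inter_subset_inter_left h_axis))]

lemma sum_secantPlanes_axis (h : G.IsBinucleus K Q π₁ π₂) :
    ∑ π ∈ G.secantPlanes K Q with π₁ ∩ π₂ ⊆ π, G.planeDefect K π Q +
      #{π ∈ ((G.pencil (π₁ ∩ π₂)).erase π₁).erase π₂ | K ∩ π ⊆ G.tangentPoints K Q} *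
        (q + 2 - 2 * #(K ∩ (π₁ ∩ π₂))) =
      G.defect K Q + 4 * q - 4 - 2 * q * #(K ∩ (π₁ ∩ π₂)) := by
  have h_sum := sum_planeDefect_pencil (K := K) (Q := Q) h.inter_mem_lines
  have h_tangent : ∀ π ∈ {π ∈ ((G.pencil (π₁ ∩ π₂)).erase π₁).erase π₂ |
      K ∩ π ⊆ G.tangentPoints K Q},
      G.planeDefect K π Q = q + 2 - 2 * #(K ∩ (π₁ ∩ π₂)) := fun π hπ ↦ by
    simp only [mem_filter, mem_erase, mem_pencil] at hπ
    obtain ⟨⟨hπ₂, hπ₁, hπ, h_axis⟩, hT⟩ := hπ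
    exact h.planeDefect_of_axis_subset hπ h_axis hπ₁ hπ₂ hT
  have h₁ : π₁ ∈ G.pencil (π₁ ∩ π₂) :=
    mem_pencil.mpr ⟨(mem_nuclearPlanes.mp h.left_mem).1, inter_subset_left⟩
  have h₂ : π₂ ∈ (G.pencil (π₁ ∩ π₂)).erase π₁ := mem_erase.mpr
    ⟨h.ne.symm, mem_pencil.mpr ⟨(mem_nuclearPlanes.mp h.right_mem).1, inter_subset_right⟩⟩
  have h_filter : {π ∈ ((G.pencil (π₁ ∩ π₂)).erase π₁).erase π₂ | ¬ K ∩ π ⊆ G.tangentPoints K Q} =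
      {π ∈ G.secantPlanes K Q | π₁ ∩ π₂ ⊆ π} := by
    ext π
    have h_ne := h.ne_of_mem_secantPlanes (π := π)
    have hQ : π₁ ∩ π₂ ⊆ π → Q ∈ π := fun h_sub ↦ h_sub h.mem_inter_planes
    rw [mem_secantPlanes] at h_ne
    simp only [mem_filter, mem_erase, mem_pencil, mem_secantPlanes]
    tauto
  rw [← add_sum_erase _ _ h₁, ← add_sum_erase _ _ h₂, h.planeDefect_left, h.symm.planeDefect_left,
    tangentPoints_inter_eq h.axis_subset_tangentPoints,
    ← sum_filter_add_sum_filter_not _ fun π ↦ K ∩ π ⊆ G.tangentPoints K Q, h_filter,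
    sum_congr rfl h_tangent, sum_const, nsmul_eq_mul] at h_sum
  linear_combination h_sum

end IsBinucleus

variable (G) in
/-- The planes through `Q` whose only point on `K` lies on `π₁` but not on `π₂`. -/
def unisecantPlanes (K : Finset α) (Q : α) (π₁ π₂ : Finset α) : Finset (Finset α) :=
  {π ∈ G.planes | Q ∈ π ∧ ∃ P ∈ π₁ \ π₂, K ∩ π = {P}}

lemma mem_unisecantPlanes : π ∈ G.unisecantPlanes K Q π₁ π₂ ↔
    π ∈ G.planes ∧ Q ∈ π ∧ ∃ P ∈ π₁ \ π₂, K ∩ π = {P} := mem_filter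

namespace IsBinucleus

lemma not_axis_subset_of_mem (h : G.IsBinucleus K Q π₁ π₂) (hπ : π ∈ G.planes) (hπ₁ : π ≠ π₁)
    (hP : P ∈ π₁ \ π₂) (hPπ : P ∈ π) : ¬ π₁ ∩ π₂ ⊆ π := fun h_axis ↦
  hπ₁ (eq_of_mem_planes h.inter_mem_lines hπ (mem_nuclearPlanes.mp h.left_mem).1 h_axis
    inter_subset_left (fun hP' ↦ (mem_sdiff.mp hP).2 (mem_inter.mp hP').2) hPπ (mem_sdiff.mp hP).1)

lemma unisecantPlanes_spec (h : G.IsBinucleus K Q π₁ π₂) (hπ : π ∈ G.unisecantPlanes K Q π₁ π₂) :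
    G.planeDefect K π Q = q ∧ K ∩ (π ∩ π₂) = ∅ ∧ ¬ π₁ ∩ π₂ ⊆ π := by
  obtain ⟨hπ, -, P, hP, h_inter⟩ := mem_unisecantPlanes.mp hπ
  obtain ⟨-, h_card, -, h_sub⟩ := mem_nuclearPlanes.mp h.left_mem
  have hP_mem : P ∈ K ∩ π := h_inter ▸ mem_singleton_self P
  obtain ⟨hPK, hPπ⟩ := mem_inter.mp hP_mem
  obtain ⟨hPπ₁, hPπ₂⟩ := mem_sdiff.mp hP
  have hT : K ∩ π ⊆ G.tangentPoints K Q := by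
    rw [h_inter, singleton_subset_iff]
    exact h_sub (mem_inter.mpr ⟨hPK, hPπ₁⟩)
  have hπ₁ : π ≠ π₁ := by
    rintro rfl
    have hq := h.four_mul_card_outerPoints_add_le
    rw [h_inter, card_singleton] at h_card
    lia
  refine ⟨?_, ?_, h.not_axis_subset_of_mem hπ hπ₁ hP hPπ⟩
  · rw [planeDefect_of_subset hT, h_inter, card_singleton]
    ring
  · rw [← inter_assoc, h_inter, singleton_inter_of_notMem hPπ₂]

lemma inter_right_mem_lines (h : G.IsBinucleus K Q π₁ π₂)
    (hπ : π ∈ G.unisecantPlanes K Q π₁ π₂) : π ∩ π₂ ∈ G.lines ∧ Q ∈ π ∩ π₂ := by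
  obtain ⟨hπ', hQ, -⟩ := mem_unisecantPlanes.mp hπ
  obtain ⟨hπ₂, -, hQπ₂, -⟩ := mem_nuclearPlanes.mp h.right_mem
  have h_ne : π ≠ π₂ := fun h_eq ↦ (h.unisecantPlanes_spec hπ).2.2 (h_eq ▸ inter_subset_right)
  exact ⟨G.inter_mem_lines hπ' hπ₂ h_ne, mem_inter.mpr ⟨hQ, hQπ₂⟩⟩

/-- The line of `π₂` through `Q` external to `K` lies on all the planes in question. -/
lemma unisecantPlanes_subset_pencil (h : G.IsBinucleus K Q π₁ π₂)
    (hπ' : π' ∈ G.unisecantPlanes K Q π₁ π₂) :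
    G.unisecantPlanes K Q π₁ π₂ ⊆ (G.pencil (π' ∩ π₂)).erase π₂ := by
  intro π hπ
  have hq := h.four_mul_card_outerPoints_add_le
  obtain ⟨hl, hQl⟩ := h.inter_right_mem_lines hπ
  obtain ⟨hl', hQl'⟩ := h.inter_right_mem_lines hπ'
  obtain ⟨-, h_ext, h_axis⟩ := h.unisecantPlanes_spec hπ
  have h_eq := eq_of_nuclear_of_external h.notMem h.right_mem (by lia) hl hl' inter_subset_right
    inter_subset_right hQl hQl' h_ext (h.unisecantPlanes_spec hπ').2.1
  refine mem_erase.mpr ⟨fun h_eq ↦ h_axis (h_eq ▸ inter_subset_right), mem_pencil.mpr ?_⟩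
  exact ⟨(mem_unisecantPlanes.mp hπ).1, h_eq ▸ inter_subset_left⟩

lemma card_unisecantPlanes_le (h : G.IsBinucleus K Q π₁ π₂) :
    #(G.unisecantPlanes K Q π₁ π₂) ≤ 3 := by
  obtain h_empty | ⟨π', hπ'⟩ := (G.unisecantPlanes K Q π₁ π₂).eq_empty_or_nonempty
  · rw [h_empty, card_empty]
    exact Nat.zero_le 3
  obtain ⟨hπ₂, -⟩ := mem_nuclearPlanes.mp h.right_mem
  obtain ⟨-, h_ext, h_axis⟩ := h.unisecantPlanes_spec hπ'
  obtain ⟨hl, hQl⟩ := h.inter_right_mem_lines hπ'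
  have h_sum := sum_planeDefect_pencil (K := K) (Q := Q) hl
  rw [← add_sum_erase _ _ (mem_pencil.mpr ⟨hπ₂, inter_subset_right⟩), h.symm.planeDefect_left,
    tangentPoints_inter_eq (h_ext ▸ empty_subset _), h_ext, card_empty] at h_sum
  have h_nonneg : ∀ π ∈ (G.pencil (π' ∩ π₂)).erase π₂, 0 ≤ G.planeDefect K π Q := by
    intro π hπ
    obtain ⟨h_ne, hπ⟩ := mem_erase.mp hπ
    obtain ⟨hπ, h_sub⟩ := mem_pencil.mp hπ
    refine h.planeDefect_nonneg hπ (h_sub hQl) ?_ h_ne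
    rintro rfl
    have h_eq : π' ∩ π₂ = π ∩ π₂ := eq_of_subset_of_card_le
      (subset_inter h_sub inter_subset_right)
      (by rw [G.card_line hl, G.card_line h.inter_mem_lines])
    exact h_axis (h_eq ▸ inter_subset_left)
  have h_le := sum_le_sum_of_subset_of_nonneg (h.unisecantPlanes_subset_pencil hπ')
    fun π hπ _ ↦ h_nonneg π hπ
  rw [sum_congr rfl fun π hπ ↦ (h.unisecantPlanes_spec hπ).1, sum_const, nsmul_eq_mul] at h_le
  have hq := h.four_mul_card_outerPoints_add_le
  have h_defect := h.defect_le
  zify at hq ⊢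
  push_cast at h_sum
  nlinarith

lemma planeDefect_of_notMem_unisecantPlanes (h : G.IsBinucleus K Q π₁ π₂) (hπ : π ∈ G.planes)
    (hQ : Q ∈ π) (hπ₁ : π ≠ π₁) (hT : K ∩ π ⊆ G.tangentPoints K Q) (hPK : P ∈ K)
    (hP : P ∈ π₁ \ π₂) (hPπ : P ∈ π) (hπ_uni : π ∉ G.unisecantPlanes K Q π₁ π₂) :
    G.planeDefect K π Q = q - 2 := by
  have h_le := h.card_tangentPoints_inter_le hπ hQ hπ₁ fun h_eq ↦
    (mem_sdiff.mp hP).2 (h_eq ▸ hPπ)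
  rw [h.outerPoints_inter_eq_empty hπ hQ hT, tangentPoints_inter_eq hT, card_empty] at h_le
  have hP_mem : P ∈ K ∩ π := mem_inter.mpr ⟨hPK, hPπ⟩
  have h_pos : 0 < #(K ∩ π) := card_pos.mpr ⟨P, hP_mem⟩
  have h_ne_one : #(K ∩ π) ≠ 1 := fun h_one ↦ by
    obtain ⟨R, hR⟩ := card_eq_one.mp h_one
    obtain rfl : P = R := mem_singleton.mp (hR ▸ hP_mem)
    exact hπ_uni (mem_unisecantPlanes.mpr ⟨hπ, hQ, P, hP, hR⟩)
  rw [planeDefect_of_subset hT, show #(K ∩ π) = 2 by lia]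
  ring

/-- Besides `π₁` and the secant planes, the planes on the line `QP` have defect `q - 2`, and at most
one of them fits into the total defect. -/
lemma defect_le_sum_secantPlanes (h : G.IsBinucleus K Q π₁ π₂) (hPK : P ∈ K) (hP : P ∈ π₁ \ π₂)
    (hP_uni : ∀ π ∈ G.unisecantPlanes K Q π₁ π₂, P ∉ π) :
    G.defect K Q ≤ ∑ π ∈ G.secantPlanes K Q with ¬ π₁ ∩ π₂ ⊆ π ∧ P ∈ π, G.planeDefect K π Q := by
  have hQP : Q ≠ P := fun h' ↦ h.notMem (h' ▸ hPK)
  obtain ⟨hπ₁, -, hQπ₁, -⟩ := mem_nuclearPlanes.mp h.left_mem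
  have h_mem : ∀ π, π ∈ G.pencil (G.line Q P) ↔ π ∈ G.planes ∧ Q ∈ π ∧ P ∈ π := by
    intro π
    rw [mem_pencil]
    exact ⟨fun ⟨hπ, h_sub⟩ ↦ ⟨hπ, h_sub (G.left_mem_line Q P), h_sub (G.right_mem_line Q P)⟩,
      fun ⟨hπ, hQ, hPπ⟩ ↦ ⟨hπ, G.line_subset_plane hπ hQ hPπ hQP⟩⟩
  have h_tangent : ∀ π ∈ {π ∈ (G.pencil (G.line Q P)).erase π₁ | K ∩ π ⊆ G.tangentPoints K Q},
      G.planeDefect K π Q = q - 2 := by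
    simp only [mem_filter, mem_erase, h_mem]
    rintro π ⟨⟨h_ne, hπ, hQ, hPπ⟩, hT⟩
    exact h.planeDefect_of_notMem_unisecantPlanes hπ hQ h_ne hT hPK hP hPπ
      fun hπ_uni ↦ hP_uni π hπ_uni hPπ
  have h_filter : {π ∈ (G.pencil (G.line Q P)).erase π₁ | ¬ K ∩ π ⊆ G.tangentPoints K Q} =
      {π ∈ G.secantPlanes K Q | ¬ π₁ ∩ π₂ ⊆ π ∧ P ∈ π} := by
    ext π
    have h_ne := h.ne_of_mem_secantPlanes (π := π)
    have h_axis := h.not_axis_subset_of_mem (π := π) (P := P)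
    rw [mem_secantPlanes] at h_ne
    simp only [mem_filter, mem_erase, h_mem, mem_secantPlanes]
    tauto
  have h_nonneg : 0 ≤ ∑ π ∈ G.secantPlanes K Q with ¬ π₁ ∩ π₂ ⊆ π ∧ P ∈ π, G.planeDefect K π Q :=
    sum_nonneg fun π hπ ↦ h.planeDefect_nonneg_of_mem_secantPlanes (mem_of_mem_filter π hπ)
  have h_sum := h.isSegreCap.isCap.sum_planeDefect hPK h.notMem
  rw [← add_sum_erase _ _ ((h_mem π₁).mpr ⟨hπ₁, hQπ₁, (mem_sdiff.mp hP).1⟩), h.planeDefect_left,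
    ← sum_filter_add_sum_filter_not _ fun π ↦ K ∩ π ⊆ G.tangentPoints K Q, h_filter,
    sum_congr rfl h_tangent, sum_const, nsmul_eq_mul] at h_sum
  have hq := h.four_mul_card_outerPoints_add_le
  have h_defect := h.defect_le
  generalize #{π ∈ (G.pencil (G.line Q P)).erase π₁ | K ∩ π ⊆ G.tangentPoints K Q} = j at h_sum
  have hj : j ≤ 1 := by
    by_contra! hj
    zify at hj hq
    nlinarith
  interval_cases j <;> lia

lemma defect_mul_le_sum_secantPlanes (h : G.IsBinucleus K Q π₁ π₂) :
    G.defect K Q * (q - 4) ≤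
      ∑ π ∈ G.secantPlanes K Q with ¬ π₁ ∩ π₂ ⊆ π, G.planeDefect K π Q := by
  set S := {P ∈ (K ∩ π₁) \ π₂ | ∀ π ∈ G.unisecantPlanes K Q π₁ π₂, P ∉ π} with hS
  have hS_card : (q : ℤ) - 4 ≤ #S := by
    have h_cover : K ∩ π₁ ⊆ S ∪ K ∩ (π₁ ∩ π₂) ∪
        (G.unisecantPlanes K Q π₁ π₂).biUnion fun π ↦ K ∩ (π ∩ π₁) := by
      intro P hP
      simp only [hS, mem_union, mem_filter, mem_sdiff, mem_inter, mem_biUnion] at hP ⊢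
      grind
    have h_bi := card_biUnion_le_card_mul (G.unisecantPlanes K Q π₁ π₂) (fun π ↦ K ∩ (π ∩ π₁)) 1
      fun π hπ ↦ card_inter_inter_le_one h.left_mem (mem_unisecantPlanes.mp hπ).1
        (mem_unisecantPlanes.mp hπ).2.1
        fun h_eq ↦ (h.unisecantPlanes_spec hπ).2.2 (h_eq ▸ inter_subset_left)
    have h_le := (card_le_card h_cover).trans (card_union_le _ _)
    have h_le' := card_union_le S (K ∩ (π₁ ∩ π₂))
    have h_axis := h.card_axis_le_one
    have h_uni := h.card_unisecantPlanes_le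
    rw [(mem_nuclearPlanes.mp h.left_mem).2.1] at h_le
    lia
  have h_nonneg := h.isSegreCap.defect_nonneg h.notMem
  calc G.defect K Q * (q - 4) ≤ #S * G.defect K Q := by nlinarith
    _ ≤ ∑ P ∈ S, ∑ π ∈ {π ∈ G.secantPlanes K Q | ¬ π₁ ∩ π₂ ⊆ π} with P ∈ π,
          G.planeDefect K π Q := by
      rw [← nsmul_eq_mul, ← sum_const]
      refine sum_le_sum fun P hP ↦ ?_
      simp only [hS, mem_filter, mem_sdiff, mem_inter] at hP
      rw [filter_filter]
      exact h.defect_le_sum_secantPlanes hP.1.1.1 (mem_sdiff.mpr ⟨hP.1.1.2, hP.1.2⟩) hP.2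
    _ = ∑ π ∈ G.secantPlanes K Q with ¬ π₁ ∩ π₂ ⊆ π, G.planeDefect K π Q * #(S ∩ π) :=
      (sum_mul_card_inter _ _ _).symm
    _ ≤ ∑ π ∈ G.secantPlanes K Q with ¬ π₁ ∩ π₂ ⊆ π, G.planeDefect K π Q := by
      refine sum_le_sum fun π hπ ↦ ?_
      obtain ⟨hπ, -⟩ := mem_filter.mp hπ
      have h_one : #(S ∩ π) ≤ 1 := by
        refine le_trans (card_le_card ?_) (card_inter_inter_le_one h.left_mem
          (mem_secantPlanes.mp hπ).1 (mem_secantPlanes.mp hπ).2.1 (h.ne_of_mem_secantPlanes hπ).1)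
        intro P hP
        simp only [hS, mem_filter, mem_sdiff, mem_inter] at hP ⊢
        tauto
      exact mul_le_of_le_one_right (h.planeDefect_nonneg_of_mem_secantPlanes hπ)
        (by exact_mod_cast h_one)

lemma mul_card_inter_ge (h : G.IsBinucleus K Q π₁ π₂) (hπ : π ∈ G.secantPlanes K Q) {m : ℤ}
    (hm : #(G.tangentPoints K Q ∩ π) ≤ m + #(G.outerPoints K Q π₁ π₂ ∩ π)) :
    G.planeDefect K π Q * (q + 2 - G.defect K Q - 2 * m) ≤
      G.planeDefect K π Q * #((K \ G.tangentPoints K Q) ∩ π) +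
        2 * (G.planeDefect K π Q * #(G.outerPoints K Q π₁ π₂ ∩ π)) := by
  have h_nonneg := h.planeDefect_nonneg_of_mem_secantPlanes hπ
  have h_le := h.planeDefect_le_defect hπ
  have h_card : #((K \ G.tangentPoints K Q) ∩ π) + #(G.tangentPoints K Q ∩ π) = #(K ∩ π) := by
    have h_subset : G.tangentPoints K Q ⊆ K := tangentPoints_subset
    rw [← card_sdiff_add_card_inter (K ∩ π) (G.tangentPoints K Q)]
    congr 2 <;> ext P <;> simp only [mem_inter, mem_sdiff] <;> grind
  have h_eq : (#((K \ G.tangentPoints K Q) ∩ π) : ℤ) =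
      q + 2 - G.planeDefect K π Q - 2 * #(G.tangentPoints K Q ∩ π) := by
    rw [planeDefect, planeTangentDegree]
    lia
  rw [h_eq]
  nlinarith

/-- Double counting of the points of `K` on no tangent through `Q`, each plane being weighted with
its defect. -/
lemma weighted_sum_le (h : G.IsBinucleus K Q π₁ π₂) :
    (∑ π ∈ G.secantPlanes K Q with π₁ ∩ π₂ ⊆ π, G.planeDefect K π Q) *
        (q + 2 - G.defect K Q - 2 * #(K ∩ (π₁ ∩ π₂))) +
      (∑ π ∈ G.secantPlanes K Q with ¬ π₁ ∩ π₂ ⊆ π, G.planeDefect K π Q) *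
        (q + 2 - G.defect K Q - 2 * 2) ≤
      G.defect K Q * #(K \ G.tangentPoints K Q) +
        2 * (G.defect K Q * #(G.outerPoints K Q π₁ π₂)) := by
  rw [← h.sum_planeDefect_mul_card_inter h.sdiff_tangentPoints_subset,
    ← h.sum_planeDefect_mul_card_inter outerPoints_subset, mul_sum, ← sum_add_distrib,
    ← sum_filter_add_sum_filter_not (G.secantPlanes K Q) fun π ↦ π₁ ∩ π₂ ⊆ π, sum_mul, sum_mul]
  refine add_le_add (sum_le_sum fun π hπ ↦ ?_) (sum_le_sum fun π hπ ↦ ?_)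
  all_goals
    obtain ⟨hπ, h_axis⟩ := mem_filter.mp hπ
    obtain ⟨hπ', hQ, -⟩ := mem_secantPlanes.mp hπ
    obtain ⟨hπ₁, hπ₂⟩ := h.ne_of_mem_secantPlanes hπ
    refine h.mul_card_inter_ge hπ ?_
  · exact_mod_cast h.card_tangentPoints_inter_le_of_axis_subset hπ' h_axis hπ₁ hπ₂
  · exact_mod_cast h.card_tangentPoints_inter_le hπ' hQ hπ₁ hπ₂

lemma le_sum_secantPlanes (h : G.IsBinucleus K Q π₁ π₂) (h_defect : G.defect K Q < 4) :
    q - 10 + G.defect K Q ≤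
      ∑ π ∈ G.secantPlanes K Q with π₁ ∩ π₂ ⊆ π, G.planeDefect K π Q := by
  have h_sum := h.sum_secantPlanes_axis
  have h_nonneg : 0 ≤ ∑ π ∈ G.secantPlanes K Q with π₁ ∩ π₂ ⊆ π, G.planeDefect K π Q :=
    sum_nonneg fun π hπ ↦ h.planeDefect_nonneg_of_mem_secantPlanes (mem_of_mem_filter π hπ)
  have h_axis := h.card_axis_le_one
  have hq := h.four_mul_card_outerPoints_add_le
  generalize #{π ∈ ((G.pencil (π₁ ∩ π₂)).erase π₁).erase π₂ | K ∩ π ⊆ G.tangentPoints K Q} = j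
    at h_sum
  generalize #(K ∩ (π₁ ∩ π₂)) = ε at h_sum h_axis
  have hj : j ≤ 3 := by
    by_contra! hj
    zify at hj hq
    have h_mul : (j - 4 : ℤ) * q ≥ 0 := mul_nonneg (by lia) (by lia)
    interval_cases ε <;> lia
  interval_cases ε <;> interval_cases j <;> lia

lemma four_le_defect (h : G.IsBinucleus K Q π₁ π₂) (hq_even : Even q) : 4 ≤ G.defect K Q := by
  by_contra! h_lt
  have h_axis := h.card_axis_le_one
  have hq := h.four_mul_card_outerPoints_add_le
  have ht := h.tangentDegree_le
  have hX := h.le_sum_secantPlanes h_lt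
  have hY := h.defect_mul_le_sum_secantPlanes
  have h_weighted := h.weighted_sum_le
  have h_T := card_tangentPoints_add_card_inter h.left_mem h.right_mem
  have h_card := card_sdiff_add_card_eq_card (tangentPoints_subset (G := G) (K := K) (Q := Q))
  have h_def : G.defect K Q = tangentDegree q K - #(G.tangentPoints K Q) := rfl
  obtain ⟨m, hm⟩ := h.isSegreCap.isCap.even_defect hq_even h.notMem
  have h_nonneg := h.isSegreCap.defect_nonneg h.notMem
  rw [tangentDegree] at ht h_def
  generalize (∑ π ∈ G.secantPlanes K Q with π₁ ∩ π₂ ⊆ π, G.planeDefect K π Q) = X at *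
  generalize (∑ π ∈ G.secantPlanes K Q with ¬ π₁ ∩ π₂ ⊆ π, G.planeDefect K π Q) = Y at *
  generalize #(K ∩ (π₁ ∩ π₂)) = ε at *
  generalize G.defect K Q = δ at *
  subst hm
  have hm' : m = 0 ∨ m = 1 := by lia
  zify at hq h_T h_card
  obtain rfl | rfl := hm'
  · have h₁ : 0 < X * (q + 2 - 2 * ε) := mul_pos (by lia) (by lia)
    have h₂ : 0 ≤ Y * (q - 2) := mul_nonneg (by lia) (by lia)
    lia
  · have h₁ : (q - 8 : ℤ) * (q - 2 * ε) ≤ X * (q - 2 * ε) := by gcongr <;> lia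
    have h₂ : (2 * (q - 4) : ℤ) * (q - 4) ≤ Y * (q - 4) := by gcongr <;> lia
    have h₃ : (0 : ℤ) < (q - 2) * (q - 18) := mul_pos (by lia) (by lia)
    interval_cases ε <;> lia

end IsBinucleus

end ProjectiveThreeSpace

/-! ### The tangent degree of a cap without free points -/

/-- With `t = 2 * q - 2 + s` and `q = 4 * s + 8 + a`, all coefficients of the difference are
positive. -/
lemma mul_lt_two_mul_of_le {q t : ℤ} (hq : 8 ≤ q) (h_lower : 2 * q - 3 ≤ t)
    (h_upper : 4 * t ≤ 9 * q - 16) : q * (q - 1) * (q ^ 3 - 1 + t) <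
      2 * ((q ^ 2 + q + 2 - t) * (t - q - 1) * (3 * (q ^ 2 + q + 1) - (q + 4) * t)) := by
  rw [← sub_pos]
  obtain rfl | h_lower := h_lower.eq_or_lt
  · obtain ⟨a, rfl⟩ := Int.le.dest hq
    ring_nf
    positivity
  · obtain ⟨s, rfl⟩ := Int.le.dest h_lower
    obtain ⟨a, ha⟩ := Int.le.dest (show 4 * (s : ℤ) + 8 ≤ q by lia)
    subst ha
    ring_nf
    positivity

lemma mul_lt_eight_mul_of_le {q t : ℤ} (hq : 8 ≤ q) (h_lower : 2 * q - 3 ≤ t)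
    (h_upper : 4 * t ≤ 9 * q - 16) : 4 * (q * (q - 1) * (q ^ 3 - 1 + t)) +
      (q * (q - 1) - 8 * (2 * q - 1)) * (t * (q + 1) * (t - q - 1)) <
      8 * ((q ^ 2 + q + 2 - t) * (t - q - 1) * (3 * (q ^ 2 + q + 1) - (q + 4) * t)) := by
  rw [← sub_pos]
  obtain rfl | h_lower := h_lower.eq_or_lt
  · obtain ⟨a, rfl⟩ := Int.le.dest hq
    ring_nf
    positivity
  · obtain ⟨s, rfl⟩ := Int.le.dest h_lower
    obtain ⟨a, ha⟩ := Int.le.dest (show 4 * (s : ℤ) + 8 ≤ q by lia)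
    subst ha
    ring_nf
    positivity

namespace ProjectiveThreeSpace

variable {α : Type*} [Fintype α] [DecidableEq α] {q : ℕ} {G : ProjectiveThreeSpace α q}
variable {K : Finset α} {Q : α}

variable (G) in
/-- The points off `K` that are nuclei of at least two plane sections of `K` of size `q`. -/
noncomputable def binuclei (K : Finset α) : Finset α := {Q ∈ Kᶜ | 1 < #(G.nuclearPlanes K Q)}

lemma notMem_of_mem_binuclei (hQ : Q ∈ G.binuclei K) : Q ∉ K :=
  mem_compl.mp (mem_of_mem_filter Q hQ)

lemma two_mul_le_card_tangentPoints (hQ : Q ∈ G.binuclei K) :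
    2 * q ≤ #(G.tangentPoints K Q) + 1 := by
  obtain ⟨π₁, h₁, π₂, h₂, h_ne⟩ := one_lt_card.mp (mem_filter.mp hQ).2
  obtain ⟨hπ₁, -, hQ₁, -⟩ := mem_nuclearPlanes.mp h₁
  have h_sum := card_tangentPoints_add_card_inter h₁ h₂
  have h_axis := card_inter_inter_le_one h₂ hπ₁ hQ₁ h_ne
  lia

namespace IsSegreCap

lemma four_le_defect (hK : G.IsSegreCap K) (hq : Even q)
    (ht : 4 * tangentDegree q K ≤ 9 * q - 16) (hQ : Q ∈ G.binuclei K) : 4 ≤ G.defect K Q := by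
  by_contra! h_lt
  have hQK := notMem_of_mem_binuclei hQ
  have h_card := two_mul_le_card_tangentPoints hQ
  have h_def : G.defect K Q = tangentDegree q K - #(G.tangentPoints K Q) := rfl
  obtain ⟨π₁, h₁, π₂, h₂, h_ne⟩ := one_lt_card.mp (mem_filter.mp hQ).2
  have h : G.IsBinucleus K Q π₁ π₂ := ⟨hK, hQK, h₁, h₂, h_ne, ht, by lia⟩
  exact h_lt.not_ge (h.four_le_defect hq)

lemma two_mul_card_qPlanes_le (hK : G.IsSegreCap K) (hq : 2 < q) (hq_even : Even q)
    (ht : tangentDegree q K < 3 * q - 3) :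
    2 * (#(G.qPlanes K) : ℤ) ≤ q ^ 3 - 1 + tangentDegree q K + #(G.binuclei K) := by
  have h_compl : (#Kᶜ : ℤ) = q ^ 3 - 1 + tangentDegree q K := by
    rw [card_compl_eq G, tangentDegree]
    ring
  rw [← h_compl]
  norm_cast
  rw [hK.two_mul_card_qPlanes hq hq_even, binuclei, card_filter, card_eq_sum_ones,
    ← sum_add_distrib]
  refine sum_le_sum fun Q hQ ↦ ?_
  have h_two := hK.card_nuclearPlanes_le_two (mem_compl.mp hQ) ht
  split_ifs <;> lia

lemma four_mul_card_binuclei_le (hK : G.IsSegreCap K) (hq : Even q)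
    (ht : 4 * tangentDegree q K ≤ 9 * q - 16) : 4 * #(G.binuclei K) ≤
      tangentDegree q K * (q + 1) * ((q : ℤ) ^ 2 + 1 - #K) := by
  rw [← hK.isCap.sum_defect, mul_comm, ← nsmul_eq_mul]
  exact (card_nsmul_le_sum _ _ _ fun Q hQ ↦ hK.four_le_defect hq ht hQ).trans
    (sum_le_sum_of_subset_of_nonneg (filter_subset _ _)
      fun Q hQ _ ↦ hK.defect_nonneg (mem_compl.mp hQ))

lemma four_mul_card_binuclei_le_defectMoment (hK : G.IsSegreCap K) (hq : Even q)
    (ht : 4 * tangentDegree q K ≤ 9 * q - 16) :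
    4 * (2 * q - 1) * #(G.binuclei K) ≤ G.defectMoment K := by
  rw [mul_comm, ← nsmul_eq_mul]
  refine (card_nsmul_le_sum _ _ _ fun Q hQ ↦ ?_).trans
    (sum_le_sum_of_subset_of_nonneg (filter_subset _ _)
      fun Q hQ _ ↦ mul_nonneg (hK.defect_nonneg (mem_compl.mp hQ)) (Int.natCast_nonneg _))
  have h_defect := hK.four_le_defect hq ht hQ
  have h_card := two_mul_le_card_tangentPoints hQ
  calc 4 * (2 * q - 1 : ℤ) ≤ 4 * #(G.tangentPoints K Q) := by lia
    _ ≤ G.defect K Q * #(G.tangentPoints K Q) := by gcongr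

lemma le_tangentDegree (hK : G.IsSegreCap K) (hK_card : #K ≤ q ^ 2) :
    2 * (q : ℤ) - 3 ≤ tangentDegree q K := by
  have h_moment : 0 ≤ G.defectMoment K := sum_nonneg fun Q hQ ↦
    mul_nonneg (hK.defect_nonneg (mem_compl.mp hQ)) (Int.natCast_nonneg _)
  have h_le := hK.isCap.two_mul_le
  have h_card : (#K : ℤ) = q ^ 2 + q + 2 - tangentDegree q K := by rw [tangentDegree]; ring
  zify at hK_card
  by_contra! h_lt
  have h_pos : (0 : ℤ) < #K * (q ^ 2 + 1 - #K) := mul_pos (by nlinarith) (by lia)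
  have h_mul : 2 * (#K - 1) ≤ tangentDegree q K * (q + 1) :=
    le_of_mul_le_mul_left (by linarith) h_pos
  nlinarith

/-- The count of the planes meeting `K` in `q` points bounds the cubic on the right by the defects
of the binuclei, and these are few. -/
theorem lt_four_mul_tangentDegree (hK : G.IsSegreCap K) (hq : 8 ≤ q) (hq_even : Even q)
    (hK_card : #K ≤ q ^ 2) : 9 * q - 16 < 4 * tangentDegree q K := by
  by_contra! ht
  have h_lower := hK.le_tangentDegree hK_card
  have h_planes := hK.two_mul_card_qPlanes_le (by lia) hq_even (by lia)
  have h_count := hK.isCap.three_mul_le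
  have h_binuclei := hK.four_mul_card_binuclei_le hq_even ht
  have h_moment := hK.four_mul_card_binuclei_le_defectMoment hq_even ht
  have h_card : (#K : ℤ) = q ^ 2 + q + 2 - tangentDegree q K := by rw [tangentDegree]; ring
  have h_lt := mul_lt_two_mul_of_le (by exact_mod_cast hq) h_lower ht
  have h_lt' := mul_lt_eight_mul_of_le (by exact_mod_cast hq) h_lower ht
  rw [h_card] at h_count h_binuclei
  generalize tangentDegree q K = t at *
  zify at hq
  have h_main :
      2 * (((q : ℤ) ^ 2 + q + 2 - t) * (t - q - 1) * (3 * (q ^ 2 + q + 1) - (q + 4) * t)) +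
      (8 * (2 * q - 1) - q * (q - 1)) * #(G.binuclei K) ≤ q * (q - 1) * (q ^ 3 - 1 + t) := by
    have h_mul := mul_le_mul_of_nonneg_left h_planes (show (0 : ℤ) ≤ q * (q - 1) by nlinarith)
    linarith
  rcases le_total ((q : ℤ) * (q - 1)) (8 * (2 * q - 1)) with h_coeff | h_coeff
  · have h_nonneg := mul_nonneg (sub_nonneg.mpr h_coeff) (Int.natCast_nonneg #(G.binuclei K))
    linarith
  · have h_mul := mul_le_mul_of_nonneg_left h_binuclei (sub_nonneg.mpr h_coeff)
    linarith

end IsSegreCap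

end ProjectiveThreeSpace

section PG

variable {F : Type*} [Field F] {n : ℕ} {P Q R : PGPoint F n} {W : Submodule F (Fin (n + 1) → F)}

lemma submodule_le_iff_rep_mem : P.submodule ≤ W ↔ P.rep ∈ W := by
  rw [P.submodule_eq, Submodule.span_singleton_le_iff_mem]

lemma mk_mem_ptsIn {v : Fin (n + 1) → F} (hv : v ≠ 0) :
    Projectivization.mk F v hv ∈ ptsIn W ↔ v ∈ W := by
  rw [ptsIn, Set.mem_ofPred_eq, Projectivization.submodule_mk, Submodule.span_singleton_le_iff_mem]

lemma ptsIn_subset_ptsIn {W' : Submodule F (Fin (n + 1) → F)} :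
    ptsIn W ⊆ ptsIn W' ↔ W ≤ W' := by
  refine ⟨fun h w hw ↦ ?_, fun h P hP ↦ le_trans hP h⟩
  rcases eq_or_ne w 0 with rfl | hw0
  · exact W'.zero_mem
  · exact (mk_mem_ptsIn hw0).mp (h ((mk_mem_ptsIn hw0).mpr hw))

lemma ptsIn_eq_range :
    ptsIn W = Set.range (Projectivization.map W.subtype W.subtype_injective) := by
  ext P
  constructor
  · intro hP
    have h_rep := submodule_le_iff_rep_mem.mp hP
    exact ⟨.mk F ⟨P.rep, h_rep⟩ fun h ↦ P.rep_nonzero (congrArg Subtype.val h), P.mk_rep⟩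
  · rintro ⟨R, rfl⟩
    induction R using Projectivization.ind with
    | h v hv => exact (mk_mem_ptsIn _).mpr v.2

lemma ncard_ptsIn [Fintype F] :
    (ptsIn W).ncard = ∑ i ∈ range (finrank F W), Fintype.card F ^ i := by
  rw [ptsIn_eq_range, ← Set.image_univ,
    Set.ncard_image_of_injective _ (Projectivization.map_injective _ _), Set.ncard_univ,
    Projectivization.card_of_finrank F W rfl, Nat.card_eq_fintype_card]

lemma finrank_sup_submodule (hP : ¬ P.submodule ≤ W) :
    finrank F ↥(W ⊔ P.submodule) = finrank F W + 1 := by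
  have h_le := Submodule.finrank_add_le_finrank_add_finrank W P.submodule
  have h_lt := Submodule.finrank_lt_finrank_of_lt (left_lt_sup.mpr hP)
  rw [P.finrank_submodule] at h_le
  lia

lemma finrank_submodule_sup_submodule (hPQ : P ≠ Q) :
    finrank F ↥(P.submodule ⊔ Q.submodule) = 2 := by
  rw [finrank_sup_submodule fun h ↦ hPQ (Projectivization.submodule_injective
    (Submodule.eq_of_le_of_finrank_eq h (by simp only [Projectivization.finrank_submodule])).symm),
    P.finrank_submodule]

lemma finrank_inf_eq_two {U U' : Submodule F (Fin (3 + 1) → F)} (hU : finrank F U = 3)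
    (hU' : finrank F U' = 3) (h_ne : U ≠ U') : finrank F ↥(U ⊓ U') = 2 := by
  have h_lt : U < U ⊔ U' := left_lt_sup.mpr fun h ↦
    h_ne (Submodule.eq_of_le_of_finrank_eq h (hU'.trans hU.symm)).symm
  have h_rank := Submodule.finrank_sup_add_finrank_inf_eq U U'
  have h_le := Submodule.finrank_le (U ⊔ U')
  have h_sup := Submodule.finrank_lt_finrank_of_lt h_lt
  rw [finrank_fin_fun] at h_le
  lia

lemma coll3_iff_submodule_le (hPQ : P ≠ Q) :
    Coll3 P Q R ↔ R.submodule ≤ P.submodule ⊔ Q.submodule := by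
  refine ⟨fun h ↦ ?_, fun h ↦ ?_⟩
  · by_contra hR
    rw [Coll3, finrank_sup_submodule hR, finrank_submodule_sup_submodule hPQ] at h
    lia
  · rw [Coll3, sup_eq_left.mpr h, finrank_submodule_sup_submodule hPQ]

lemma Coll3.rotate (h : Coll3 P Q R) : Coll3 Q R P := by
  rwa [Coll3, sup_comm, ← sup_assoc]

lemma Coll3.swap (h : Coll3 P Q R) : Coll3 Q P R := by
  rwa [Coll3, sup_comm Q.submodule]

lemma IsCompleteCap.exists_coll3 {K : Set (PGPoint F n)} (hK : IsCompleteCap K) (hQ : Q ∉ K) :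
    ∃ P ∈ K, ∃ R ∈ K, P ≠ R ∧ Coll3 P R Q := by
  have h := hK.2 Q hQ
  unfold IsCap at h
  push Not at h
  obtain ⟨A, hA, B, hB, C, hC, hAB, hAC, hBC, hcoll⟩ := h
  rcases hA with rfl | hA
  · exact ⟨B, hB.resolve_left hAB.symm, C, hC.resolve_left hAC.symm, hBC, hcoll.rotate⟩
  rcases hB with rfl | hB
  · exact ⟨C, hC.resolve_left hBC.symm, A, hA, hAC.symm, hcoll.rotate.rotate⟩
  rcases hC with rfl | hC
  · exact ⟨A, hA, B, hB, hAB, hcoll⟩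
  · exact absurd hcoll (hK.1 A hA B hB C hC hAB hAC hBC)

lemma linearIndependent_rep (h : ¬ Coll3 P Q R) : LinearIndependent F ![P.rep, Q.rep, R.rep] := by
  have h_span : Submodule.span F (Set.range ![P.rep, Q.rep, R.rep]) =
      P.submodule ⊔ Q.submodule ⊔ R.submodule := by
    simp only [Matrix.range_cons, Matrix.range_empty, Set.union_empty, Submodule.span_union,
      Projectivization.submodule_eq, sup_assoc]
  rw [linearIndependent_iff_card_le_finrank_span, Set.finrank, h_span, Fintype.card_fin]
  exact Nat.lt_of_not_le h

lemma bracket_ne_zero_of_not_coll3 {ψ : (Fin (n + 1) → F) →ₗ[F] (Fin 3 → F)} (hψ : Set.InjOn ψ W)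
    (hP : P.submodule ≤ W) (hQ : Q.submodule ≤ W) (hR : R.submodule ≤ W) (h : ¬ Coll3 P Q R) :
    bracket (ψ P.rep) (ψ Q.rep) (ψ R.rep) ≠ 0 := by
  have h_mem : Set.range ![P.rep, Q.rep, R.rep] ⊆ W := by
    rintro _ ⟨i, rfl⟩
    fin_cases i
    exacts [submodule_le_iff_rep_mem.mp hP, submodule_le_iff_rep_mem.mp hQ,
      submodule_le_iff_rep_mem.mp hR]
  have h_ind := (linearIndependent_rep h).map_injOn ψ
    (hψ.mono (SetLike.coe_subset_coe.mpr (Submodule.span_le.mpr h_mem)))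
  have h_rows : ψ ∘ ![P.rep, Q.rep, R.rep] = (Matrix.of ![ψ P.rep, ψ Q.rep, ψ R.rep]).row := by
    ext i : 1
    fin_cases i <;> rfl
  rw [h_rows, Matrix.linearIndependent_rows_iff_isUnit, Matrix.isUnit_iff_isUnit_det] at h_ind
  exact h_ind.ne_zero

lemma exists_injOn_of_finrank_eq {V V' : Type*} [AddCommGroup V] [Module F V] [AddCommGroup V']
    [Module F V'] [FiniteDimensional F V'] {U : Submodule F V} [FiniteDimensional F U]
    (hU : finrank F U = finrank F V') : ∃ ψ : V →ₗ[F] V', Set.InjOn ψ U := by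
  obtain ⟨ψ, hψ⟩ := LinearMap.exists_extend (LinearEquiv.ofFinrankEq U V' hU).toLinearMap
  refine ⟨ψ, fun x hx y hy hxy ↦ ?_⟩
  have h_eq : ∀ u : U, ψ u = LinearEquiv.ofFinrankEq U V' hU u := LinearMap.congr_fun hψ
  exact congrArg Subtype.val ((LinearEquiv.ofFinrankEq U V' hU).injective
    ((h_eq ⟨x, hx⟩).symm.trans (hxy.trans (h_eq ⟨y, hy⟩))))

theorem IsCap.card_tangents_add_card_le [Fintype F] [CharP F 2] {A T : Finset (PGPoint F n)}
    (hA : IsCap (A : Set (PGPoint F n))) (hW : finrank F W = 3)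
    (hAW : ∀ P ∈ A, P.submodule ≤ W) (hQW : Q.submodule ≤ W) (hTA : T ⊆ A)
    (htan : ∀ P ∈ T, ∀ R ∈ A, R ≠ P → ¬ Coll3 P Q R) (hP : P ∈ A) (hR : R ∈ A) (hPR : P ≠ R)
    (hPQ : P ≠ Q) (hcoll : Coll3 P Q R) : #T + #A ≤ Fintype.card F + 2 := by
  obtain ⟨ψ, hψ⟩ : ∃ ψ : (Fin (n + 1) → F) →ₗ[F] (Fin 3 → F), Set.InjOn ψ W :=
    exists_injOn_of_finrank_eq (hW.trans (finrank_fin_fun F).symm)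
  have hR_rep : R.rep ∈ Submodule.span F {P.rep, Q.rep} := by
    rw [Submodule.span_insert, ← P.submodule_eq, ← Q.submodule_eq]
    exact submodule_le_iff_rep_mem.mp ((coll3_iff_submodule_le hPQ).mp hcoll)
  obtain ⟨a, b, hab⟩ := Submodule.mem_span_pair.mp hR_rep
  have hv_arc : IsArcFamily (fun X : PGPoint F n ↦ ψ X.rep) A := fun x hx y hy z hz hxy hxz hyz ↦
    bracket_ne_zero_of_not_coll3 hψ (hAW x hx) (hAW y hy) (hAW z hz)
      (hA x hx y hy z hz hxy hxz hyz)
  have hv_tan : ∀ x ∈ T, ∀ y ∈ A, y ≠ x → bracket (ψ x.rep) (ψ Q.rep) (ψ y.rep) ≠ 0 :=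
    fun x hx y hy hyx ↦ bracket_ne_zero_of_not_coll3 hψ (hAW x (hTA hx)) hQW (hAW y hy)
      (htan x hx y hy hyx)
  exact hv_arc.card_tangents_add_card_le hTA hv_tan hP hR hPR (α := a) (β := b)
    (by rw [← hab, map_add, map_smul, map_smul])

end PG

/-! ### The cap bound in `PG(3, q)` -/

section Flats

variable {F : Type*} [Field F] {n : ℕ} [Fintype (PGPoint F n)]
  {P Q : PGPoint F n} {W W' : Submodule F (Fin (n + 1) → F)}

open scoped Classical in
/-- The finite set of points of the flat of `PG(n, F)` determined by a linear subspace. -/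
noncomputable def flatPoints (W : Submodule F (Fin (n + 1) → F)) : Finset (PGPoint F n) :=
  {P | P.submodule ≤ W}

lemma mem_flatPoints : P ∈ flatPoints W ↔ P.submodule ≤ W := by simp [flatPoints]

lemma coe_flatPoints : (flatPoints W : Set (PGPoint F n)) = ptsIn W :=
  Set.ext fun _ ↦ mem_flatPoints

lemma flatPoints_subset_flatPoints : flatPoints W ⊆ flatPoints W' ↔ W ≤ W' := by
  rw [← coe_subset, coe_flatPoints, coe_flatPoints, ptsIn_subset_ptsIn]

lemma card_flatPoints [Fintype F] :
    #(flatPoints W) = ∑ i ∈ range (finrank F W), Fintype.card F ^ i := by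
  rw [← Set.ncard_coe_finset, coe_flatPoints, ncard_ptsIn]

lemma flatPoints_sup_eq (hP : P ∈ flatPoints W) (hQ : Q ∈ flatPoints W) (hPQ : P ≠ Q)
    (hW : finrank F W = 2) : flatPoints (P.submodule ⊔ Q.submodule) = flatPoints W := by
  rw [Submodule.eq_of_le_of_finrank_eq (sup_le (mem_flatPoints.mp hP) (mem_flatPoints.mp hQ))
    ((finrank_submodule_sup_submodule hPQ).trans hW.symm)]

open scoped Classical in
variable (F n) in
/-- The flats of `PG(n, F)` of vector space dimension `d`, as sets of points. -/
noncomputable def flats (d : ℕ) : Finset (Finset (PGPoint F n)) :=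
  {s | ∃ W : Submodule F (Fin (n + 1) → F), finrank F W = d ∧ flatPoints W = s}

lemma mem_flats {d : ℕ} {s : Finset (PGPoint F n)} : s ∈ flats F n d ↔
    ∃ W : Submodule F (Fin (n + 1) → F), finrank F W = d ∧ flatPoints W = s := by
  simp [flats]

lemma card_of_mem_flats [Fintype F] {d : ℕ} {s : Finset (PGPoint F n)} (hs : s ∈ flats F n d) :
    #s = ∑ i ∈ range d, Fintype.card F ^ i := by
  obtain ⟨W, rfl, rfl⟩ := mem_flats.mp hs
  exact card_flatPoints

variable (F n) in
lemma card_pgPoint [Fintype F] :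
    Fintype.card (PGPoint F n) = ∑ i ∈ range (n + 1), Fintype.card F ^ i := by
  rw [← Nat.card_eq_fintype_card, ← Nat.card_eq_fintype_card,
    Projectivization.card_of_finrank F _ (finrank_fin_fun F)]

lemma card_flats_through_of_notMem [DecidableEq (PGPoint F n)] {d : ℕ} {s : Finset (PGPoint F n)}
    (hs : s ∈ flats F n d) (hP : P ∉ s) : #{π ∈ flats F n (d + 1) | s ⊆ π ∧ P ∈ π} = 1 := by
  obtain ⟨W, rfl, rfl⟩ := mem_flats.mp hs
  have h_rank := finrank_sup_submodule fun h ↦ hP (mem_flatPoints.mpr h)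
  refine card_eq_one.mpr ⟨flatPoints (W ⊔ P.submodule), ?_⟩
  ext π
  rw [mem_filter, mem_singleton, mem_flats]
  constructor
  · rintro ⟨⟨U, hU, rfl⟩, hWU, hPU⟩
    rw [Submodule.eq_of_le_of_finrank_eq (sup_le (flatPoints_subset_flatPoints.mp hWU)
      (mem_flatPoints.mp hPU)) (h_rank.trans hU.symm)]
  · rintro rfl
    exact ⟨⟨_, h_rank, rfl⟩, flatPoints_subset_flatPoints.mpr le_sup_left,
      mem_flatPoints.mpr le_sup_right⟩

lemma exists_mem_flatPoints_of_coplanar [Fintype (PGPoint F 3)]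
    {U L M : Submodule F (Fin (3 + 1) → F)}
    (hU : finrank F U = 3) (hL : finrank F L = 2) (hM : finrank F M = 2) (hLU : L ≤ U)
    (hMU : M ≤ U) : ∃ P ∈ flatPoints L, P ∈ flatPoints M := by
  have h_ne : L ⊓ M ≠ ⊥ := fun h ↦ by
    have h_rank := Submodule.finrank_sup_add_finrank_inf_eq L M
    rw [h, finrank_bot] at h_rank
    have h_le := Submodule.finrank_mono (sup_le hLU hMU)
    lia
  obtain ⟨v, hv, hv0⟩ := Submodule.exists_mem_ne_zero_of_ne_bot h_ne
  exact ⟨.mk F v hv0, mem_flatPoints.mpr ((mk_mem_ptsIn hv0).mpr hv.1),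
    mem_flatPoints.mpr ((mk_mem_ptsIn hv0).mpr hv.2)⟩

end Flats

section PGThree

variable {F : Type*} [Field F] [Fintype F] [Fintype (PGPoint F 3)] [DecidableEq (PGPoint F 3)]

lemma card_planes_through {l : Finset (PGPoint F 3)} (hl : l ∈ flats F 3 2) :
    #{π ∈ flats F 3 3 | l ⊆ π} = Fintype.card F + 1 := by
  have h_off : ∀ π ∈ flats F 3 3 |>.filter (l ⊆ ·), #{P ∈ lᶜ | P ∈ π} = Fintype.card F ^ 2 := by
    intro π hπ
    rw [mem_filter] at hπ
    rw [filter_mem_eq_inter, compl_eq_univ_sdiff, sdiff_inter_right_comm, univ_inter,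
      card_sdiff_of_subset hπ.2, card_of_mem_flats hπ.1, card_of_mem_flats hl, sum_range_succ,
      Nat.add_sub_cancel_left]
  have h_one : ∀ P ∈ lᶜ, #{π ∈ flats F 3 3 |>.filter (l ⊆ ·) | P ∈ π} = 1 := fun P hP ↦ by
    rw [filter_filter, card_flats_through_of_notMem hl (mem_compl.mp hP)]
  have h_count := sum_card_filter_comm ((flats F 3 3).filter (l ⊆ ·)) lᶜ fun π P ↦ P ∈ π
  rw [sum_congr rfl h_off, sum_congr rfl h_one, sum_const, ← card_eq_sum_ones, card_compl,
    card_pgPoint, card_of_mem_flats hl, smul_eq_mul] at h_count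
  refine Nat.eq_of_mul_eq_mul_right (pow_pos (Fintype.card_pos (α := F)) 2) (h_count.trans ?_)
  rw [sum_range_succ, sum_range_succ, add_assoc, Nat.add_sub_cancel_left]
  ring

variable (F) in
/-- The incidence geometry of `PG(3, F)`. -/
noncomputable def pgThreeSpace : ProjectiveThreeSpace (PGPoint F 3) (Fintype.card F) where
  lines := flats F 3 2
  planes := flats F 3 3
  line P Q := flatPoints (P.submodule ⊔ Q.submodule)
  card_points := by
    rw [card_pgPoint]
    simp only [sum_range_succ, range_zero, sum_empty]
    ring
  line_mem_lines hPQ := mem_flats.mpr ⟨_, finrank_submodule_sup_submodule hPQ, rfl⟩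
  left_mem_line _ _ := mem_flatPoints.mpr le_sup_left
  right_mem_line _ _ := mem_flatPoints.mpr le_sup_right
  eq_line hl P Q hP hQ hPQ := by
    obtain ⟨L, hL, rfl⟩ := mem_flats.mp hl
    exact (flatPoints_sup_eq hP hQ hPQ hL).symm
  line_subset_plane hπ P Q hP hQ _ := by
    obtain ⟨U, -, rfl⟩ := mem_flats.mp hπ
    exact flatPoints_subset_flatPoints.mpr
      (sup_le (mem_flatPoints.mp hP) (mem_flatPoints.mp hQ))
  card_line hl := by
    rw [card_of_mem_flats hl]
    simp only [sum_range_succ, range_zero, sum_empty]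
    ring
  card_plane hπ := by
    rw [card_of_mem_flats hπ]
    simp only [sum_range_succ, range_zero, sum_empty]
    ring
  card_planes_through := card_planes_through
  card_planes_through_of_notMem hl _ hP := card_flats_through_of_notMem hl hP
  exists_mem_of_coplanar hπ l m hl hm hlπ hmπ := by
    obtain ⟨U, hU, rfl⟩ := mem_flats.mp hπ
    obtain ⟨L, hL, rfl⟩ := mem_flats.mp hl
    obtain ⟨M, hM, rfl⟩ := mem_flats.mp hm
    exact exists_mem_flatPoints_of_coplanar hU hL hM (flatPoints_subset_flatPoints.mp hlπ)
      (flatPoints_subset_flatPoints.mp hmπ)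
  inter_mem_lines hπ hπ' h_ne := by
    obtain ⟨U, hU, rfl⟩ := mem_flats.mp hπ
    obtain ⟨U', hU', rfl⟩ := mem_flats.mp hπ'
    refine mem_flats.mpr ⟨U ⊓ U', finrank_inf_eq_two hU hU' fun h ↦ h_ne (by rw [h]), ?_⟩
    ext P
    simp only [mem_inter, mem_flatPoints, le_inf_iff]

variable {K : Finset (PGPoint F 3)} {P Q R : PGPoint F 3}

lemma mem_pgThreeSpace_line (hPR : P ≠ R) : Q ∈ (pgThreeSpace F).line P R ↔ Coll3 P R Q :=
  mem_flatPoints.trans (coll3_iff_submodule_le hPR).symm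

lemma IsCap.card_tangentPoints_inter_add_card_le [CharP F 2]
    (hK : IsCap (K : Set (PGPoint F 3))) {π : Finset (PGPoint F 3)}
    (hπ : π ∈ (pgThreeSpace F).planes) (hQπ : Q ∈ π) (hQ : Q ∉ K) (hP : P ∈ K ∩ π)
    (hR : R ∈ K ∩ π) (hPR : P ≠ R) (hQPR : Q ∈ (pgThreeSpace F).line P R) :
    #((pgThreeSpace F).tangentPoints K Q ∩ π) + #(K ∩ π) ≤ Fintype.card F + 2 := by
  obtain ⟨U, hU, rfl⟩ := mem_flats.mp hπ
  have h_ne : ∀ X ∈ K, X ≠ Q := fun X hX h ↦ hQ (h ▸ hX)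
  refine IsCap.card_tangents_add_card_le (A := K ∩ flatPoints U) (Q := Q)
    (fun X hX Y hY Z hZ ↦ hK X (mem_inter.mp hX).1 Y (mem_inter.mp hY).1 Z (mem_inter.mp hZ).1) hU
    (fun X hX ↦ mem_flatPoints.mp (mem_inter.mp hX).2) (mem_flatPoints.mp hQπ)
    (inter_subset_inter_right ProjectiveThreeSpace.tangentPoints_subset)
    (fun X hX Y hY hYX hcoll ↦ ?_) hP hR hPR (h_ne P (mem_inter.mp hP).1)
    ((mem_pgThreeSpace_line hPR).mp hQPR).rotate.rotate.swap
  have hX_tan := ProjectiveThreeSpace.mem_tangentPoints.mp (mem_inter.mp hX).1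
  exact hX_tan.2 Y (mem_inter.mp hY).1 hYX
    ((mem_pgThreeSpace_line hYX.symm).mpr hcoll.rotate.rotate.swap)

lemma IsCompleteCap.isSegreCap [CharP F 2] (hK : IsCompleteCap (K : Set (PGPoint F 3))) :
    (pgThreeSpace F).IsSegreCap K where
  isCap P hP R hR S hS hPR hPS hRS hS_mem :=
    hK.1 P hP R hR S hS hPR hPS hRS ((mem_pgThreeSpace_line hPR).mp hS_mem)
  exists_secant Q hQ := by
    obtain ⟨P, hP, R, hR, hPR, hcoll⟩ := hK.exists_coll3 hQ
    exact ⟨P, hP, R, hR, hPR, (mem_pgThreeSpace_line hPR).mpr hcoll⟩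
  segre_bound _ hπ _ hQπ hQ _ hP _ hR hPR hQPR :=
    hK.1.card_tangentPoints_inter_add_card_le hπ hQπ hQ hP hR hPR hQPR

end PGThree

lemma charP_two_of_even_card {F : Type*} [Field F] [Fintype F] (hF : Even (Fintype.card F)) :
    CharP F 2 :=
  ringChar.of_eq (FiniteField.even_card_iff_char_two.mpr (Nat.even_iff.mp hF))

theorem IsCompleteCap.four_mul_ncard_lt {F : Type*} [Field F] [Fintype F]
    (hF : Even (Fintype.card F)) (hF8 : 8 ≤ Fintype.card F) {K : Set (PGPoint F 3)}
    (hK : IsCompleteCap K) (hK_card : K.ncard ≤ Fintype.card F ^ 2) :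
    (4 * K.ncard : ℤ) < 4 * Fintype.card F ^ 2 - 5 * Fintype.card F + 24 := by
  classical
  have := Fintype.ofFinite (PGPoint F 3)
  have := charP_two_of_even_card hF
  obtain ⟨K, rfl⟩ := K.toFinite.exists_finset_coe
  rw [Set.ncard_coe_finset] at hK_card ⊢
  have h_lt := hK.isSegreCap.lt_four_mul_tangentDegree hF8 hF hK_card
  rw [ProjectiveThreeSpace.tangentDegree] at h_lt
  linarith

lemma two_pow_eq_or_le {n : ℕ} (hn : 8 ≤ 2 ^ n) :
    2 ^ n = 8 ∨ 2 ^ n = 16 ∨ 2 ^ n = 32 ∨ 2 ^ n = 64 ∨ 128 ≤ 2 ^ n := by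
  rcases lt_or_ge n 7 with hn7 | hn7
  · interval_cases n <;> simp at *
  · have := Nat.pow_le_pow_right two_pos hn7
    lia

/-- For large `q` this holds because `√5 < 9 / 4`; rounding to integers closes the gap for the
smaller powers of two. -/
lemma sqrt_five_mul_lt {q : ℕ} {t : ℤ} (hq : q = 8 ∨ q = 16 ∨ q = 32 ∨ q = 64 ∨ 128 ≤ q)
    (ht : 9 * q - 16 < 4 * t) : √5 * q < t + 3 := by
  have h_sq : 5 * (q : ℤ) ^ 2 < (t + 3) ^ 2 := by
    rcases hq with rfl | rfl | rfl | rfl | hq <;> push_cast at ht ⊢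
    · nlinarith [show 15 ≤ t by lia]
    · nlinarith [show 33 ≤ t by lia]
    · nlinarith [show 69 ≤ t by lia]
    · nlinarith [show 141 ≤ t by lia]
    · zify at hq
      nlinarith
  have h_sq' : 5 * (q : ℝ) ^ 2 < (t + 3) ^ 2 := by exact_mod_cast h_sq
  have ht0 : (0 : ℝ) ≤ t + 3 := by exact_mod_cast (by lia : (0 : ℤ) ≤ t + 3)
  refine lt_of_pow_lt_pow_left₀ 2 ht0 ?_
  rwa [mul_pow, Real.sq_sqrt (by norm_num)]

theorem stmt9 (F : Type*) [Field F] [Fintype F] (q : ℕ) (hcard : Fintype.card F = q)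
    (hqeven : Even q) (hq : 8 ≤ q)
    (K : Set (PGPoint F 3)) (hK : IsCompleteCap K) (hk : K.ncard < q ^ 2 + 1) :
    (K.ncard : ℝ) < (q : ℝ) ^ 2 - (Real.sqrt 5 - 1) * (q : ℝ) + 5 := by
  subst hcard
  have h_lt := hK.four_mul_ncard_lt hqeven hq (Nat.lt_succ_iff.mp hk)
  have := charP_two_of_even_card hqeven
  obtain ⟨n, -, hn⟩ := FiniteField.card F 2
  have h_sqrt := sqrt_five_mul_lt (t := Fintype.card F ^ 2 + Fintype.card F + 2 - K.ncard)
    (hn ▸ two_pow_eq_or_le (hn ▸ hq)) (by linarith)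
  push_cast at h_sqrt
  linarith
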